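/- Let q ≥ 25 be a prime power that is a perfect square. Then the asymptotic maximal achievable rate for linear intersecting codes over F_q satisfies R_q ≥ 1/2 − 1/(2(q^{1/2} − 1)). -/

import Mathlib

/-!
Let `s = √q`. The codes are evaluation codes on the Garcia–Stichtenoth tower over `F = F_q`, and
the proof works with rings and valuations only: neither the genus nor Riemann–Roch is used.

**The tower.** Inside the Laurent series field `F((t))` there are elements `y_0 = 1/t`, `y_1, …`
such that `z = 1 / y_{k+1}` solves `z ^ s + z = 1 / u_k`, where `u_k = y_k ^ s + y_k`
(`exists_tower`). The pole order of `y_n` is `s ^ n`. The ring `R_n` (`poleRing`) consists of the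
elements of `F[y_k, 1/y_k, 1/u_k : k ≤ n]` that are regular outside the totally ramified pole of
`y_n`. Put `c = s ^ (n+1)` and `N = (s-1) c`. Three facts about `R_n` are needed (`exists_ring`).
* A nonzero element of `R_n` does not vanish at the pole (`poleRing_eq_zero`).
* `h = u_n ^ (s-1) - 1` lies in `R_n`, has pole order `N`, and satisfies `f ^ q ≡ f` modulo `h`
  for all `f ∈ R_n` (`poleRing_frob`). Hence all zeros of `h` are rational and simple, and an
  element vanishing at all of them is a multiple of `h` (`dvd_of_vanish`).
* Every integer `≥ c` is the pole order of an element of `R_n`. This follows from an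
  approximation statement (`exists_approx`), proved by induction up the tower.

**Approximation.** The induction step needs control over the pole of `1 / y_{n+1}` at the zeros of
`u_n`. The descending chain `x_j = y_{n-j}` is there classified by the first index `k` at which
`x_k` is not small; `x_k` is then close to a constant `a` with `a ^ (s-1) = -1`. Beyond that index,
`x_{k+i+1}` has polar part `-a² / x_{k-i-1}` (`TypeAt.et_S`, `TypeAt.et_W`), so the ramification
of the first steps cancels that of the later ones. From this, `exists_tau` and `exists_shift` build
an element `Y` of level `n` such that `1 / y_{n+1} - Y` is either integral or has a pole too small to
do any harm.

**The code.** Let `M = ⌊(N + c) / 2⌋`. Choose zeros of `h` such that the evaluations at them form a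
basis of the span of all evaluations on `R_n(c)`, the space of elements of pole order at most `c`.
The code consists of the values, at all zeros of `h`, of the functions of pole order at most `M`
vanishing at the chosen zeros (`PoleData.exists_code`). If two codewords `f, f'` have disjoint
supports, then `f f' = h g` with `g ∈ R_n(c)`. Since `f f'` vanishes doubly at the chosen zeros, `g`
vanishes there, hence at all zeros of `h`; as `c < N`, this gives `g = 0`. The length is at most
`N` and the dimension at least `M - c`, so that the rate is asymptotically at least
`(N - c) / (2 N) = 1/2 - 1/(2 (s-1))`.
-/

/-- A linear code `C ⊆ Fⁿ` is intersecting if any two nonzero codewords have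
intersecting supports. -/
def IsLinIntersecting {F : Type*} [Field F] {n : ℕ} (C : Submodule F (Fin n → F)) : Prop :=
  ∀ c ∈ C, c ≠ 0 → ∀ c' ∈ C, c' ≠ 0 → ∃ i : Fin n, c i ≠ 0 ∧ c' i ≠ 0

/-- The maximum dimension of a linear intersecting code of length `n` over `F`. -/
noncomputable def maxIntersectingDim (F : Type*) [Field F] (n : ℕ) : ℕ :=
  sSup {k : ℕ | ∃ C : Submodule F (Fin n → F), IsLinIntersecting C ∧ Module.finrank F C = k}

/-- `R_q`: the asymptotic maximal achievable rate for linear intersecting codes over `F`. -/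
noncomputable def Rq (F : Type*) [Field F] : ℝ :=
  Filter.limsup (fun n : ℕ => (maxIntersectingDim F n : ℝ) / n) Filter.atTop



set_option linter.unusedSectionVars false

namespace GS

/-! ### Artin–Schreier equations and valuations -/

/-- Standing assumptions: `F` has `s ^ 2` elements with `s ≥ 3`, and `a ↦ a ^ s` is additive on the
extension field `E` (so `s` is a power of the characteristic). -/
structure Setup (F E : Type*) [Field F] [Fintype F] [Field E] [Algebra F E] (s : ℕ) : Prop where
  three_le : 3 ≤ s
  card : Fintype.card F = s ^ 2
  add_pow : ∀ a b : E, (a + b) ^ s = a ^ s + b ^ s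

section Basic

variable {F E : Type*} [Field F] [Fintype F] [Field E] [Algebra F E] {s : ℕ}

namespace Setup

variable (H : Setup F E s)
include H

lemma ne_zero : s ≠ 0 := by have := H.three_le; omega

lemma zero_pow : (0 : E) ^ s = 0 := _root_.zero_pow H.ne_zero

lemma neg_pow (a : E) : (-a) ^ s = -a ^ s := by
  have h := H.add_pow (-a) a
  rw [neg_add_cancel, H.zero_pow] at h
  linear_combination -h

lemma sub_pow (a b : E) : (a - b) ^ s = a ^ s - b ^ s := by
  rw [sub_eq_add_neg, H.add_pow, H.neg_pow, sub_eq_add_neg]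

lemma add_pow_pow (k : ℕ) (a b : E) : (a + b) ^ s ^ k = a ^ s ^ k + b ^ s ^ k := by
  induction k with
  | zero => simp
  | succ k ih => rw [pow_succ, pow_mul, ih, H.add_pow, ← pow_mul, ← pow_mul]

lemma sub_pow_pow (k : ℕ) (a b : E) : (a - b) ^ s ^ k = a ^ s ^ k - b ^ s ^ k := by
  induction k with
  | zero => simp
  | succ k ih => rw [pow_succ, pow_mul, ih, H.sub_pow, ← pow_mul, ← pow_mul]

lemma cast_eq_zero : (s : E) = 0 := by
  have h1 : ((s : F)) ^ 2 = 0 := by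
    have : ((Fintype.card F : ℕ) : F) = 0 := by simp
    rw [H.card] at this
    exact_mod_cast this
  have h2 : (s : F) = 0 := by simpa using h1
  have := congrArg (algebraMap F E) h2
  simpa using this

lemma const_pow (c : F) : c ^ (s ^ 2) = c := by
  rw [← H.card]; exact FiniteField.pow_card c

/-- The identity `x ^ q - x = ∏ (x - α)` over `F_q`. -/
lemma pow_sub_eq_prod (x : E) : x ^ (s ^ 2) - x = ∏ c : F, (x - algebraMap F E c) := by
  have hcard : 1 < Fintype.card F := Fintype.one_lt_card
  have hmon : (Polynomial.X ^ Fintype.card F - Polynomial.X : Polynomial F).Monic :=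
    Polynomial.monic_X_pow_sub (by rw [Polynomial.degree_X]; exact_mod_cast hcard)
  have h0 := Polynomial.prod_multiset_X_sub_C_of_monic_of_roots_card_eq hmon (by
    rw [FiniteField.roots_X_pow_card_sub_X, FiniteField.X_pow_card_sub_X_natDegree_eq F hcard]
    rfl)
  rw [FiniteField.roots_X_pow_card_sub_X] at h0
  have h1 : ∏ c : F, (Polynomial.X - Polynomial.C c) =
      (Polynomial.X ^ Fintype.card F - Polynomial.X : Polynomial F) := h0
  have h := congrArg (Polynomial.aeval x) h1
  rw [map_prod] at h
  simpa [H.card] using h.symm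

end Setup

variable {Γ : Type*} [LinearOrderedCommGroupWithZero Γ] (v : Valuation E Γ)

/-- Nonzero constants are roots of unity, hence units for every valuation. -/
lemma val_const {c : F} (hc : c ≠ 0) : v (algebraMap F E c) = 1 := by
  have h : c ^ (Fintype.card F - 1) = 1 := FiniteField.pow_card_sub_one_eq_one c hc
  have h' : v (algebraMap F E c) ^ (Fintype.card F - 1) = 1 := by
    rw [← map_pow, ← map_pow, h, map_one, map_one]
  have hne : Fintype.card F - 1 ≠ 0 := by
    have := Fintype.one_lt_card (α := F); omega
  exact (pow_eq_one_iff_of_nonneg zero_le hne).1 h'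

lemma val_const_le (c : F) : v (algebraMap F E c) ≤ 1 := by
  by_cases hc : c = 0
  · simp [hc]
  · exact (val_const v hc).le

variable {v}

lemma val_add_le {a b : E} {g : Γ} (ha : v a ≤ g) (hb : v b ≤ g) : v (a + b) ≤ g :=
  v.map_add_le ha hb

lemma val_sub_le {a b : E} {g : Γ} (ha : v a ≤ g) (hb : v b ≤ g) : v (a - b) ≤ g :=
  v.map_sub_le ha hb

lemma val_add_lt {a b : E} {g : Γ} (ha : v a < g) (hb : v b < g) : v (a + b) < g :=
  v.map_add_lt ha hb

lemma val_sub_lt {a b : E} {g : Γ} (ha : v a < g) (hb : v b < g) : v (a - b) < g := by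
  rw [sub_eq_add_neg]; exact v.map_add_lt ha (by rwa [v.map_neg])

lemma val_mul_le {a b : E} (ha : v a ≤ 1) (hb : v b ≤ 1) : v (a * b) ≤ 1 := by
  rw [map_mul]; exact mul_le_one' ha hb

lemma val_pow_le {a : E} (ha : v a ≤ 1) (n : ℕ) : v (a ^ n) ≤ 1 := by
  rw [map_pow]; exact pow_le_one' ha n

lemma val_mul_lt {a b : E} (ha : v a < 1) (hb : v b ≤ 1) : v (a * b) < 1 := by
  rw [map_mul]; exact mul_lt_one_of_lt_of_le ha hb

lemma val_mul_lt' {a b : E} (ha : v a ≤ 1) (hb : v b < 1) : v (a * b) < 1 := by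
  rw [mul_comm]; exact val_mul_lt hb ha

lemma val_pow_lt {a : E} (ha : v a < 1) {n : ℕ} (hn : n ≠ 0) : v (a ^ n) < 1 := by
  rw [map_pow]; exact pow_lt_one₀ zero_le ha hn

lemma val_pow_lt_iff {a : E} {n : ℕ} (hn : n ≠ 0) : v (a ^ n) < 1 ↔ v a < 1 := by
  refine ⟨fun h => ?_, fun h => val_pow_lt h hn⟩
  by_contra h'
  rw [map_pow] at h
  exact absurd h (not_lt.2 (one_le_pow_of_one_le' (not_lt.1 h') n))

lemma val_eq_of_sub_lt {a b : E} (h : v (a - b) < v b) : v a = v b := by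
  have := v.map_add_eq_of_lt_right h
  rwa [sub_add_cancel] at this

lemma val_one_add {a : E} (h : v a < 1) : v (1 + a) = 1 := v.map_one_add_of_lt h

namespace Setup

variable (H : Setup F E s)
include H

lemma as_gt {w : E} (h : 1 < v w) : v (w ^ s + w) = v w ^ s := by
  have hs := H.three_le
  rw [← map_pow]
  apply v.map_add_eq_of_lt_left
  rw [map_pow]
  exact lt_self_pow₀ h (by omega)

lemma as_lt {w : E} (h : v w < 1) : v (w ^ s + w) = v w := by
  have hs := H.three_le
  by_cases h0 : w = 0
  · simp [h0, H.zero_pow]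
  apply v.map_add_eq_of_lt_right
  rw [map_pow]
  have hpos : 0 < v w := (Valuation.pos_iff v).2 h0
  exact pow_lt_self_of_lt_one₀ hpos h (by omega)

lemma as_le {w : E} (h : v w ≤ 1) : v (w ^ s + w) ≤ 1 :=
  val_add_le (val_pow_le h _) h

lemma le_of_as {w : E} (h : v (w ^ s + w) ≤ 1) : v w ≤ 1 := by
  by_contra h'
  rw [H.as_gt (not_le.1 h')] at h
  exact absurd h (not_le.2 (one_lt_pow₀ (not_le.1 h') H.ne_zero))

lemma gt_of_as {w : E} (h : 1 < v (w ^ s + w)) : 1 < v w := by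
  by_contra h'
  exact absurd (H.as_le (not_lt.1 h')) (not_le.2 h)

lemma as_fact (w : E) : w ^ s + w = w * (1 + w ^ (s - 1)) := by
  have hs := H.three_le
  obtain ⟨r, rfl⟩ : ∃ r, s = r + 1 := ⟨s - 1, by omega⟩
  simp; ring

/-- If `x ^ s + x` is small then `x` is close to a constant in the kernel of `c ↦ c ^ s + c`. -/
lemma close_of_as_lt {x : E} (h : v (x ^ s + x) < 1) :
    ∃ c : F, c ^ s + c = 0 ∧ v (x - algebraMap F E c) < 1 := by
  have hx : v x ≤ 1 := H.le_of_as h.le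
  have h1 : v (x ^ (s ^ 2) - x) < 1 := by
    have : x ^ (s ^ 2) - x = (x ^ s + x) ^ s - (x ^ s + x) := by
      rw [H.add_pow, sq, pow_mul]; ring
    rw [this]
    exact val_sub_lt (val_pow_lt h H.ne_zero) h
  rw [H.pow_sub_eq_prod, map_prod] at h1
  have h2 : ∃ c : F, v (x - algebraMap F E c) < 1 := by
    by_contra! hc
    exact absurd h1 (not_lt.2 (Finset.one_le_prod' fun c _ => hc c))
  obtain ⟨c, hc⟩ := h2
  refine ⟨c, ?_, hc⟩
  by_contra hne
  have h3 := val_const (E := E) v hne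
  have h4 : algebraMap F E (c ^ s + c) =
      (x ^ s + x) - ((x - algebraMap F E c) ^ s + (x - algebraMap F E c)) := by
    rw [H.sub_pow, map_add, map_pow]; ring
  rw [h4] at h3
  refine absurd h3 (ne_of_lt (val_sub_lt h ?_))
  rw [H.as_lt hc]; exact hc

end Setup

end Basic

end GS
set_option linter.unusedSectionVars false
namespace GS

/-! ### Étale elements over a parameter -/

section Etale

variable {F E : Type*} [Field F] [Fintype F] [Field E] [Algebra F E] {s : ℕ}
variable {Γ : Type*} [LinearOrderedCommGroupWithZero Γ] {v : Valuation E Γ}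

/-- The elements obtained from constants and a parameter `X` by ring operations, inversion of
`v`-units, and extraction of roots of the separable equations `w ^ s + w = g`. -/
inductive Et (F : Type*) {E : Type*} [Field F] [Fintype F] [Field E] [Algebra F E] (s : ℕ)
    {Γ : Type*} [LinearOrderedCommGroupWithZero Γ] (v : Valuation E Γ) (X : E) : E → Prop
  | const (c : F) : Et F s v X (algebraMap F E c)
  | param : Et F s v X X
  | add {a b : E} : Et F s v X a → Et F s v X b → Et F s v X (a + b)
  | mul {a b : E} : Et F s v X a → Et F s v X b → Et F s v X (a * b)
  | inv {a : E} : Et F s v X a → v a = 1 → Et F s v X a⁻¹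
  | as {w : E} : Et F s v X (w ^ s + w) → Et F s v X w

namespace Et

variable {X : E}

lemma one : Et F s v X 1 := by simpa using Et.const (F := F) (s := s) (v := v) (X := X) 1

lemma zero : Et F s v X 0 := by simpa using Et.const (F := F) (s := s) (v := v) (X := X) 0

lemma neg {a : E} (ha : Et F s v X a) : Et F s v X (-a) := by
  have := (Et.const (F := F) (s := s) (v := v) (X := X) (-1)).mul ha
  simpa using this

lemma sub {a b : E} (ha : Et F s v X a) (hb : Et F s v X b) : Et F s v X (a - b) := by
  rw [sub_eq_add_neg]; exact ha.add hb.neg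

lemma pow {a : E} (ha : Et F s v X a) (n : ℕ) : Et F s v X (a ^ n) := by
  induction n with
  | zero => simpa using Et.one
  | succ n ih => rw [pow_succ]; exact ih.mul ha

lemma le_one (H : Setup F E s) (hX : v X ≤ 1) {a : E} (ha : Et F s v X a) : v a ≤ 1 := by
  induction ha with
  | const c => exact val_const_le v c
  | param => exact hX
  | add _ _ h1 h2 => exact val_add_le h1 h2
  | mul _ _ h1 h2 => exact val_mul_le h1 h2
  | inv _ h _ => rw [map_inv₀, h, inv_one]
  | as _ h => exact H.le_of_as h

/-- Congruence modulo `X` in the ring of `Et` elements. -/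
def Cg (F : Type*) {E : Type*} [Field F] [Fintype F] [Field E] [Algebra F E] (s : ℕ)
    {Γ : Type*} [LinearOrderedCommGroupWithZero Γ] (v : Valuation E Γ) (X a b : E) : Prop :=
  ∃ h, Et F s v X h ∧ a - b = X * h

lemma Cg.refl (a : E) : Cg F s v X a a := ⟨0, zero, by ring⟩

lemma Cg.trans {a b c : E} (h1 : Cg F s v X a b) (h2 : Cg F s v X b c) : Cg F s v X a c := by
  obtain ⟨h, hh, e⟩ := h1
  obtain ⟨h', hh', e'⟩ := h2
  exact ⟨h + h', hh.add hh', by linear_combination e + e'⟩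

lemma Cg.add {a b c d : E} (h1 : Cg F s v X a b) (h2 : Cg F s v X c d) :
    Cg F s v X (a + c) (b + d) := by
  obtain ⟨h, hh, e⟩ := h1
  obtain ⟨h', hh', e'⟩ := h2
  exact ⟨h + h', hh.add hh', by linear_combination e + e'⟩

lemma Cg.mul {a b c d : E} (hb : Et F s v X b) (hc : Et F s v X c) (h1 : Cg F s v X a b)
    (h2 : Cg F s v X c d) : Cg F s v X (a * c) (b * d) := by
  obtain ⟨h, hh, e⟩ := h1
  obtain ⟨h', hh', e'⟩ := h2
  exact ⟨h * c + b * h', (hh.mul hc).add (hb.mul hh'), by linear_combination c * e + b * e'⟩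

lemma Cg.pow {a b : E} (ha : Et F s v X a) (hb : Et F s v X b) (h : Cg F s v X a b) (n : ℕ) :
    Cg F s v X (a ^ n) (b ^ n) := by
  induction n with
  | zero => simpa using Cg.refl 1
  | succ n ih => rw [pow_succ, pow_succ]; exact ih.mul (hb.pow n) ha h

lemma Cg.pow_pow {a : E} (ha : Et F s v X a) {Q : ℕ} (h : Cg F s v X (a ^ Q) a) (m : ℕ) :
    Cg F s v X (a ^ Q ^ m) a := by
  induction m with
  | zero => simpa using Cg.refl a
  | succ m ih =>
    rw [pow_succ, pow_mul]
    exact (ih.pow (ha.pow _) ha Q).trans h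

/-- The residue of an `Et` element modulo `X` is algebraic over `F`: it is fixed by a power of
Frobenius. -/
lemma frob (H : Setup F E s) {a : E} (ha : Et F s v X a) :
    ∃ j, j ≠ 0 ∧ Cg F s v X (a ^ s ^ (2 * j)) a := by
  induction ha with
  | const c =>
    refine ⟨1, one_ne_zero, ?_⟩
    rw [mul_one, ← map_pow, H.const_pow]
    exact Cg.refl _
  | param =>
    refine ⟨1, one_ne_zero, X ^ (s ^ (2 * 1) - 1) - 1, (param.pow _).sub one, ?_⟩
    have : s ^ (2 * 1) = (s ^ (2 * 1) - 1) + 1 := by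
      have := Nat.pos_of_ne_zero (pow_ne_zero (2 * 1) H.ne_zero); omega
    conv_lhs => rw [this]
    rw [pow_succ]; ring
  | @add a b ha hb h1 h2 =>
    obtain ⟨j, hj, c⟩ := h1
    obtain ⟨k, hk, d⟩ := h2
    refine ⟨j * k, mul_ne_zero hj hk, ?_⟩
    have c' := c.pow_pow ha k
    have d' := d.pow_pow hb j
    rw [← pow_mul] at c' d'
    rw [H.add_pow_pow, ← mul_assoc]
    refine c'.add ?_
    rwa [show 2 * k * j = 2 * j * k by ring] at d'
  | @mul a b ha hb h1 h2 =>
    obtain ⟨j, hj, c⟩ := h1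
    obtain ⟨k, hk, d⟩ := h2
    refine ⟨j * k, mul_ne_zero hj hk, ?_⟩
    have c' := c.pow_pow ha k
    have d' := d.pow_pow hb j
    rw [← pow_mul] at c' d'
    rw [mul_pow, ← mul_assoc]
    rw [show 2 * k * j = 2 * j * k by ring] at d'
    exact c'.mul ha (hb.pow _) d'
  | @inv a ha hv h =>
    obtain ⟨j, hj, h, hh, e⟩ := h
    have ha0 : a ≠ 0 := by rintro rfl; simp at hv
    refine ⟨j, hj, -(h * a⁻¹ ^ (s ^ (2 * j) + 1)), (hh.mul ((ha.inv hv).pow _)).neg, ?_⟩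
    rw [pow_succ]
    have hp : a ^ s ^ (2 * j) ≠ 0 := pow_ne_zero _ ha0
    rw [inv_pow]
    field_simp
    linear_combination -e
  | @as w hw h =>
    obtain ⟨j, hj, h, hh, e⟩ := h
    have hwT : Et F s v X w := hw.as
    set Q := s ^ (2 * j) with hQ
    set D := w ^ Q - w with hD
    have hDT : Et F s v X D := (hwT.pow _).sub hwT
    have hDs : D ^ s + D = X * h := by
      rw [← e, hD, H.sub_pow, hQ, H.add_pow_pow, ← pow_mul, ← pow_mul, mul_comm s]; ring
    have hD2 : Cg F s v X (D ^ s ^ 2) D := by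
      refine ⟨X ^ (s - 1) * h ^ s - h, ((param.pow _).mul (hh.pow _)).sub hh, ?_⟩
      have h1 : D ^ s = X * h - D := by linear_combination hDs
      have h2 : X ^ s = X ^ (s - 1) * X := by
        rw [← pow_succ]; congr 1; have := H.three_le; omega
      rw [sq, pow_mul, h1, H.sub_pow, h1, mul_pow, h2]; ring
    have hDQ (m : ℕ) : Cg F s v X (D ^ Q ^ m) D := by
      have := hD2.pow_pow hDT (j * m)
      rwa [← pow_mul, ← mul_assoc, pow_mul s (2 * j) m] at this
    have hwm (m : ℕ) : Cg F s v X (w ^ Q ^ m) (w + m * D) := by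
      induction m with
      | zero => simpa using Cg.refl w
      | succ m ih =>
        have h1 : w ^ Q ^ (m + 1) = w ^ Q ^ m + D ^ Q ^ m := by
          have : w ^ Q = w + D := by rw [hD]; ring
          rw [pow_succ', pow_mul, this, hQ, ← pow_mul, H.add_pow_pow]
        rw [h1]
        have := ih.add (hDQ m)
        convert this using 1
        push_cast; ring
    refine ⟨j * s, mul_ne_zero hj H.ne_zero, ?_⟩
    have := hwm s
    rw [H.cast_eq_zero, hQ, ← pow_mul] at this
    simpa [mul_assoc] using this

/-- By `frob`, `a ^ Q = a + X b` for some `Q > 1`, so `a (1 - a ^ (Q - 1)) = - X b`, and the factor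
`1 - a ^ (Q - 1)` is a `v`-unit. -/
lemma div_param (H : Setup F E s) {a : E} (ha : Et F s v X a) (h : v a < 1) :
    ∃ b, Et F s v X b ∧ a = X * b := by
  obtain ⟨j, hj, b, hb, e⟩ := ha.frob H
  have hQ : 1 < s ^ (2 * j) := Nat.one_lt_pow (by omega) (by have := H.three_le; omega)
  obtain ⟨r, hr⟩ : ∃ r, s ^ (2 * j) = r + 1 := ⟨s ^ (2 * j) - 1, by omega⟩
  rw [hr] at e hQ
  have hu : v (1 + -a ^ r) = 1 := val_one_add (by
    rw [Valuation.map_neg]; exact val_pow_lt h (by omega))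
  have hne : 1 + -a ^ r ≠ 0 := by intro h0; rw [h0] at hu; simp at hu
  refine ⟨-b * (1 + -a ^ r)⁻¹, hb.neg.mul ((one.add (ha.pow r).neg).inv hu), ?_⟩
  field_simp
  rw [pow_succ] at e
  linear_combination -e

/-- The ring of `Et` elements behaves like a discrete valuation ring with uniformizer `X`. -/
lemma dvr (H : Setup F E s) (hX : v X < 1) (M : ℕ) {a : E} (ha : Et F s v X a) :
    (∃ j < M, v a = v X ^ j) ∨ v a ≤ v X ^ M := by
  induction M generalizing a with
  | zero => right; simpa using ha.le_one H hX.le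
  | succ M ih =>
    rcases (ha.le_one H hX.le).eq_or_lt with h1 | h1
    · left; exact ⟨0, by omega, by simpa using h1⟩
    · obtain ⟨b, hb, rfl⟩ := ha.div_param H h1
      rcases ih hb with ⟨j, hj, e⟩ | h
      · left; exact ⟨j + 1, by omega, by rw [map_mul, e, pow_succ']⟩
      · right; rw [map_mul, pow_succ']; gcongr

/-- Elements of the localization at `X` take no value strictly between `v X` and `1`. -/
lemma le_param (H : Setup F E s) (hX : v X < 1) (hX0 : X ≠ 0) {N : ℕ} {a : E}
    (ha : Et F s v X (X ^ N * a)) (h : v a < 1) : v a ≤ v X := by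
  have hpos : 0 < v X := (Valuation.pos_iff v).2 hX0
  rcases ha.dvr H hX (N + 1) with ⟨j, hj, e⟩ | h1
  · exfalso
    rw [map_mul, map_pow] at e
    have h2 : v X ^ N * v a < v X ^ N * 1 := by
      have : 0 < v X ^ N := pow_pos hpos N
      exact mul_lt_mul_of_pos_left h this
    rw [e, mul_one] at h2
    exact absurd h2 (not_lt.2 (pow_le_pow_right_of_le_one' hX.le (by omega)))
  · rw [map_mul, map_pow, pow_succ] at h1
    exact le_of_mul_le_mul_left h1 (pow_pos hpos N)

variable (F s v X) in
/-- The localization of the ring of `Et` elements at `X`. -/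
def loc : Subalgebra F E where
  carrier := {f | ∃ N : ℕ, Et F s v X (X ^ N * f)}
  mul_mem' := by
    rintro a b ⟨N, hN⟩ ⟨M, hM⟩
    exact ⟨N + M, by convert hN.mul hM using 1; ring⟩
  add_mem' := by
    rintro a b ⟨N, hN⟩ ⟨M, hM⟩
    refine ⟨N + M, ?_⟩
    convert ((param.pow M).mul hN).add ((param.pow N).mul hM) using 1; ring
  algebraMap_mem' c := ⟨0, by simpa using const c⟩

lemma mem_loc {a : E} (ha : Et F s v X a) : a ∈ loc F s v X := ⟨0, by simpa using ha⟩

lemma inv_param_mem_loc (hX : X ≠ 0) : X⁻¹ ∈ loc F s v X := ⟨1, by simp [hX, one]⟩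

end Et

/-- Elements whose poles, over a set of valuation rings, are bounded in terms of the zeros of
`ϖ`. -/
def bdAlg (F : Type*) {E : Type*} [Field F] [Fintype F] [Field E] [Algebra F E]
    (S : Set (ValuationSubring E)) (ϖ : E) (hϖ : ∀ A ∈ S, A.valuation ϖ ≤ 1) :
    Subalgebra F E where
  carrier := {f | ∃ N : ℕ, ∀ A ∈ S, A.valuation (ϖ ^ N * f) ≤ 1}
  mul_mem' := by
    rintro a b ⟨N, hN⟩ ⟨M, hM⟩
    refine ⟨N + M, fun A hA => ?_⟩
    rw [show ϖ ^ (N + M) * (a * b) = (ϖ ^ N * a) * (ϖ ^ M * b) by ring]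
    exact val_mul_le (hN A hA) (hM A hA)
  add_mem' := by
    rintro a b ⟨N, hN⟩ ⟨M, hM⟩
    refine ⟨N + M, fun A hA => ?_⟩
    rw [show ϖ ^ (N + M) * (a + b) = ϖ ^ M * (ϖ ^ N * a) + ϖ ^ N * (ϖ ^ M * b) by ring]
    exact val_add_le (val_mul_le (val_pow_le (hϖ A hA) _) (hN A hA))
      (val_mul_le (val_pow_le (hϖ A hA) _) (hM A hA))
  algebraMap_mem' c := ⟨0, fun A _ => by simpa using val_const_le A.valuation c⟩

lemma as_mem_bdAlg (H : Setup F E s) {S : Set (ValuationSubring E)} {ϖ : E}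
    (hϖ : ∀ A ∈ S, A.valuation ϖ ≤ 1) {w : E} (hw : w ^ s + w ∈ bdAlg F S ϖ hϖ) :
    w ∈ bdAlg F S ϖ hϖ := by
  obtain ⟨N, hN⟩ := hw
  refine ⟨N, fun A hA => ?_⟩
  by_cases h1 : A.valuation w ≤ 1
  · exact val_mul_le (val_pow_le (hϖ A hA) _) h1
  · have h2 := hN A hA
    rw [map_mul, H.as_gt (not_le.1 h1)] at h2
    rw [map_mul]
    refine le_trans ?_ h2
    gcongr
    exact le_self_pow₀ (not_le.1 h1).le H.ne_zero

lemma exists_mem_bdAlg {S : Set (ValuationSubring E)} {ϖ : E}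
    (hϖ : ∀ A ∈ S, A.valuation ϖ ≤ 1) {f : E} (hf : f ∈ bdAlg F S ϖ hϖ) :
    ∃ N : ℕ, ∀ n, N ≤ n → ∀ A ∈ S, A.valuation (ϖ ^ n * f) ≤ 1 := by
  obtain ⟨N, hN⟩ := hf
  refine ⟨N, fun n hn A hA => ?_⟩
  obtain ⟨k, rfl⟩ := Nat.exists_eq_add_of_le hn
  rw [show ϖ ^ (N + k) * f = ϖ ^ k * (ϖ ^ N * f) by ring]
  exact val_mul_le (val_pow_le (hϖ A hA) _) (hN A hA)

end Etale
end GS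
set_option linter.unusedSectionVars false
namespace GS

/-! ### Chains -/

section ChainSec

variable {F E : Type*} [Field F] [Fintype F] [Field E] [Algebra F E] {s : ℕ}

/-- The Artin–Schreier expression `x_j ^ s + x_j` of the `j`-th term of a chain. -/
abbrev uu (s : ℕ) (x : ℕ → E) (j : ℕ) : E := x j ^ s + x j

/-- `x_0, …, x_{L-1}` satisfies the (descending) Garcia–Stichtenoth relations
`u_{j+1} u_j = x_j ^ (s+1)`, where `u_j = x_j ^ s + x_j ≠ 0`. -/
structure Chain (s : ℕ) (x : ℕ → E) (L : ℕ) : Prop where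
  ne : ∀ j < L, uu s x j ≠ 0
  rel : ∀ j, j + 1 < L → uu s x (j + 1) * uu s x j = x j ^ (s + 1)

/-- The algebra generated by a chain and the inverses of the `x_j` and `u_j`. -/
def chainAlg (F : Type*) {E : Type*} [Field F] [Fintype F] [Field E] [Algebra F E] (s : ℕ)
    (x : ℕ → E) (L : ℕ) : Subalgebra F E :=
  Algebra.adjoin F {f | ∃ j < L, f = x j ∨ f = (x j)⁻¹ ∨ f = (uu s x j)⁻¹}

lemma x_mem_chainAlg {x : ℕ → E} {L j : ℕ} (h : j < L) : x j ∈ chainAlg F s x L :=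
  Algebra.subset_adjoin ⟨j, h, Or.inl rfl⟩

lemma x_inv_mem_chainAlg {x : ℕ → E} {L j : ℕ} (h : j < L) : (x j)⁻¹ ∈ chainAlg F s x L :=
  Algebra.subset_adjoin ⟨j, h, Or.inr (Or.inl rfl)⟩

lemma u_inv_mem_chainAlg {x : ℕ → E} {L j : ℕ} (h : j < L) :
    (uu s x j)⁻¹ ∈ chainAlg F s x L :=
  Algebra.subset_adjoin ⟨j, h, Or.inr (Or.inr rfl)⟩

namespace Chain

variable {x : ℕ → E} {L : ℕ} (H : Setup F E s) (C : Chain s x L)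
include H C

lemma x_ne {j : ℕ} (hj : j < L) : x j ≠ 0 := by
  intro h
  refine C.ne j hj ?_
  simp [uu, h, H.zero_pow]

lemma x_inv {j : ℕ} (hj : j < L) : (x j)⁻¹ = (1 + x j ^ (s - 1)) * (uu s x j)⁻¹ := by
  have h0 := C.ne j hj
  have h1 := C.x_ne H hj
  have := H.as_fact (x j)
  rw [eq_mul_inv_iff_mul_eq₀ h0, uu, this]
  field_simp

lemma u_succ {j : ℕ} (hj : j + 1 < L) :
    uu s x (j + 1) = x j ^ (s + 1) * (uu s x j)⁻¹ := by
  rw [eq_mul_inv_iff_mul_eq₀ (C.ne j (by omega)), C.rel j hj]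

lemma one_add_mul {j : ℕ} (hj : j + 1 < L) :
    (1 + x j ^ (s - 1)) * uu s x (j + 1) = x j ^ s := by
  have h := C.rel j hj
  have h1 := C.x_ne H (j := j) (by omega)
  rw [show uu s x j = x j * (1 + x j ^ (s - 1)) from H.as_fact _, pow_succ] at h
  apply mul_right_cancel₀ h1
  linear_combination h

lemma u_succ_inv {j : ℕ} (hj : j + 1 < L) :
    (uu s x (j + 1))⁻¹ = uu s x j * (x j)⁻¹ ^ (s + 1) := by
  rw [C.u_succ H hj, mul_inv, inv_inv, inv_pow, mul_comm]

/-- The relations express `1 / x_j` through `1 / u_j` and `1 / u_{j+1}` through `u_j` and `1 / x_j`,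
so all inverses are polynomials in the `x_j` and a single `1 / u_a`. -/
lemma mem_of_u_inv {S : Subalgebra F E} {a : ℕ} (hx : ∀ j < L, a ≤ j → x j ∈ S)
    (h0 : (uu s x a)⁻¹ ∈ S) {j : ℕ} (haj : a ≤ j) (hj : j < L) :
    (x j)⁻¹ ∈ S ∧ (uu s x j)⁻¹ ∈ S := by
  have key : ∀ j < L, a ≤ j → (uu s x j)⁻¹ ∈ S → (x j)⁻¹ ∈ S := by
    intro j hj haj h
    rw [C.x_inv H hj]
    exact mul_mem (add_mem (one_mem S) (pow_mem (hx j hj haj) _)) h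
  induction j, haj using Nat.le_induction with
  | base => exact ⟨key _ hj le_rfl h0, h0⟩
  | succ j haj ih =>
    obtain ⟨h1, h2⟩ := ih (by omega)
    have h3 : (uu s x (j + 1))⁻¹ ∈ S := by
      rw [C.u_succ_inv H hj]
      have hxj := hx j (by omega) haj
      exact mul_mem (add_mem (pow_mem hxj _) hxj) (pow_mem h1 _)
    exact ⟨key _ hj (by omega) h3, h3⟩

lemma chainAlg_le {S : Subalgebra F E} (hx : ∀ j < L, x j ∈ S) (h0 : (uu s x 0)⁻¹ ∈ S) :
    chainAlg F s x L ≤ S := by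
  refine Algebra.adjoin_le ?_
  rintro f ⟨j, hj, rfl | rfl | rfl⟩
  · exact hx j hj
  · exact (C.mem_of_u_inv H (a := 0) (fun j hj _ => hx j hj) h0 (Nat.zero_le _) hj).1
  · exact (C.mem_of_u_inv H (a := 0) (fun j hj _ => hx j hj) h0 (Nat.zero_le _) hj).2

/-- A subalgebra closed under extracting roots of `w ^ s + w` contains the whole chain above its
first term. -/
lemma x_mem_of_as {S : Subalgebra F E} (hS : ∀ w : E, w ^ s + w ∈ S → w ∈ S) {a : ℕ}
    (hx : x a ∈ S) (h0 : (uu s x a)⁻¹ ∈ S) {j : ℕ} (haj : a ≤ j) (hj : j < L) :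
    x j ∈ S ∧ (uu s x j)⁻¹ ∈ S := by
  induction j, haj using Nat.le_induction with
  | base => exact ⟨hx, h0⟩
  | succ j haj ih =>
    obtain ⟨h1, h2⟩ := ih (by omega)
    refine ⟨hS _ ?_, ?_⟩
    · change uu s x (j + 1) ∈ S
      rw [C.u_succ H hj]
      exact mul_mem (pow_mem h1 _) h2
    · rw [C.u_succ_inv H hj, C.x_inv H (by omega)]
      exact mul_mem (add_mem (pow_mem h1 _) h1)
        (pow_mem (mul_mem (add_mem (one_mem S) (pow_mem h1 _)) h2) _)

lemma chainAlg_le_of_as {S : Subalgebra F E} (hS : ∀ w : E, w ^ s + w ∈ S → w ∈ S)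
    (hx : x 0 ∈ S) (h0 : (uu s x 0)⁻¹ ∈ S) : chainAlg F s x L ≤ S :=
  C.chainAlg_le H (fun _ hj => (C.x_mem_of_as H hS hx h0 (Nat.zero_le _) hj).1) h0

end Chain

/-! ### Local types -/

section Local

variable {Γ : Type*} [LinearOrderedCommGroupWithZero Γ] {v : Valuation E Γ}

/-- A valuation with `v u_0 < 1` has type `(k, c)` if `x_j` is small for `j < k` and `x_k` is close
to the constant `c ≠ 0` with `c ^ s + c = 0`. If `k = L`, then all `x_j` are small and `c` is an
arbitrary nonzero constant. -/
structure TypeAt (v : Valuation E Γ) (s : ℕ) (x : ℕ → E) (L k : ℕ) (c : F) : Prop where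
  u0 : v (uu s x 0) < 1
  le : k ≤ L
  small : ∀ j < k, v (x j) < 1
  c_ne : c ≠ 0
  c_as : k < L → c ^ s + c = 0
  close : k < L → v (x k - algebraMap F E c) < 1

variable {x : ℕ → E} {L : ℕ}

lemma u_succ_val (H : Setup F E s) (C : Chain s x L) {j : ℕ} (hj : j + 1 < L)
    (h : v (x j) < 1) : v (uu s x (j + 1)) = v (x j) ^ s := by
  have h1 := congrArg v (C.one_add_mul H hj)
  rw [map_mul, val_one_add, one_mul, map_pow] at h1
  · exact h1
  · exact val_pow_lt h (by have := H.three_le; omega)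

/-- The type is given by the first `x_k` that is not small: the relations keep `u_k` small up to
there, so `x_k` is close to a root of `c ^ s + c = 0`. -/
lemma exists_type (H : Setup F E s) (C : Chain s x L) (h : v (uu s x 0) < 1) :
    ∃ k, ∃ c : F, TypeAt v s x L k c := by
  classical
  by_cases hall : ∀ j < L, v (x j) < 1
  · exact ⟨L, 1, h, le_rfl, hall, one_ne_zero, fun h => absurd h (lt_irrefl _),
      fun h => absurd h (lt_irrefl _)⟩
  push Not at hall
  have hk := Nat.find_spec hall
  have hmin := fun j => Nat.find_min hall (m := j)
  set k := Nat.find hall with hkdef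
  have hsmall : ∀ j < k, v (x j) < 1 := by
    intro j hj
    have := hmin j hj
    push Not at this
    exact this (hj.trans hk.1)
  have huk : v (uu s x k) < 1 := by
    rcases Nat.eq_zero_or_pos k with h0 | h0
    · rwa [h0]
    · obtain ⟨m, hm⟩ : ∃ m, k = m + 1 := ⟨k - 1, by omega⟩
      rw [hm, u_succ_val H C (by omega) (hsmall m (by omega)), ← map_pow]
      exact val_pow_lt (hsmall m (by omega)) H.ne_zero
  obtain ⟨c, hc, hclose⟩ := H.close_of_as_lt huk
  refine ⟨k, c, h, hk.1.le, hsmall, ?_, fun _ => hc, fun _ => hclose⟩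
  rintro rfl
  rw [map_zero, sub_zero] at hclose
  exact absurd hclose (not_lt.2 hk.2)

omit [Fintype F] [Algebra F E] [Field F] in
lemma inv_as_eq {y : E} (hy : y ≠ 0) (s : ℕ) :
    (y ^ s + y) * y⁻¹ ^ (s + 1) = y⁻¹ ^ s + y⁻¹ := by
  rw [inv_pow, inv_pow, pow_succ]
  field_simp
  ring

/-- The case `i = 0` of `TypeAt.et_S`, with `X = x_k`, `a = c`, `ξ = x_k - c` and `U = u_k`: the sum
`u_{k+1} + c² / u_k` times the unit `1 + ξ ^ (s-1)` is a polynomial in `ξ` and `c`. -/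
lemma S_zero_identity {ξ a U X : E} {r : ℕ} (hX : X = ξ + a)
    (hX' : X ^ (r + 2) = ξ ^ (r + 2) - a) (hU : U = ξ ^ (r + 2) + ξ) (h0 : U ≠ 0) :
    (X ^ (r + 2 + 1) * U⁻¹ + a ^ 2 * U⁻¹) * (1 + ξ ^ (r + 1)) =
      ξ ^ (r + 2) + a * ξ ^ (r + 1) - a := by
  have h1 : X ^ (r + 2 + 1) + a ^ 2 = ξ * (ξ ^ (r + 2) + a * ξ ^ (r + 1) - a) := by
    rw [pow_succ, hX', hX]; ring
  have h2 : ξ * (1 + ξ ^ (r + 1)) = U := by rw [hU]; ring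
  rw [← add_mul, h1, ← mul_right_inj' h0]
  calc _ = U * U⁻¹ * (ξ * (1 + ξ ^ (r + 1))) * (ξ ^ (r + 2) + a * ξ ^ (r + 1) - a) := by ring
    _ = _ := by rw [h2, mul_inv_cancel₀ h0, one_mul]

/-- The induction step of `TypeAt.et_S`, with `X = x_{k+i+1}`, `y = x_{k-i-1}` and `a = c`: it writes
`u_{k+i+2} + c² / u_{k-i-1}` through `X + c² / y` and `y`. Since `X y` is close to `-c²`, the
two elements inverted on the right are units. -/
lemma S_succ_identity {X y a : E} {r : ℕ} (hX : X ≠ 0) (hy : y ≠ 0) (hX1 : X ^ (r + 1) + 1 ≠ 0)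
    (hy1 : 1 + y ^ (r + 1) ≠ 0) :
    X ^ (r + 2 + 1) * (X ^ (r + 2) + X)⁻¹ + a ^ 2 * (y ^ (r + 2) + y)⁻¹ =
      ((X * y) ^ (r + 1) * (X + a ^ 2 * y⁻¹) + y ^ r * ((X * y) ^ (r + 2) + a ^ 2)) *
        ((X * y) ^ (r + 1) + y ^ (r + 1))⁻¹ * (1 + y ^ (r + 1))⁻¹ := by
  have e1 : X ^ (r + 2) + X = X * (X ^ (r + 1) + 1) := by ring
  have e2 : y ^ (r + 2) + y = y * (1 + y ^ (r + 1)) := by ring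
  have e3 : (X * y) ^ (r + 1) + y ^ (r + 1) = y ^ (r + 1) * (X ^ (r + 1) + 1) := by ring
  rw [e1, e2, e3]
  field_simp
  ring

namespace TypeAt

variable {k : ℕ} {c : F} (H : Setup F E s) (C : Chain s x L) (T : TypeAt v s x L k c)
include H C T

lemma u_le {j : ℕ} (hj : j < L) (hjk : j ≤ k) : v (uu s x j) ≤ v (uu s x 0) := by
  induction j with
  | zero => exact le_rfl
  | succ j ih =>
    have hsm := T.small j (by omega)
    rw [u_succ_val H C hj hsm]
    refine le_trans ?_ (ih (by omega) (by omega))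
    rw [show uu s x j = x j ^ s + x j from rfl, H.as_lt hsm]
    exact pow_le_of_le_one zero_le hsm.le H.ne_zero

lemma x_le {j : ℕ} (hjk : j < k) : v (x j) ≤ v (uu s x 0) := by
  have := T.u_le H C (j := j) (by have := T.le; omega) hjk.le
  rwa [show uu s x j = x j ^ s + x j from rfl, H.as_lt (T.small j hjk)] at this

lemma c_pow (hk : k < L) : algebraMap F E c ^ s = -algebraMap F E c := by
  rw [← map_pow, ← map_neg, eq_neg_of_add_eq_zero_left (T.c_as hk)]

lemma xi_as (hk : k < L) :
    (x k - algebraMap F E c) ^ s + (x k - algebraMap F E c) = uu s x k := by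
  rw [H.sub_pow, T.c_pow H C hk]; ring

lemma xi_val (hk : k < L) : v (x k - algebraMap F E c) = v (uu s x k) := by
  rw [← T.xi_as H C hk, H.as_lt (T.close hk)]

lemma xi_le (hk : k < L) : v (x k - algebraMap F E c) ≤ v (uu s x 0) := by
  rw [T.xi_val H C hk]; exact T.u_le H C hk le_rfl

lemma xk_val (hk : k < L) : v (x k) = 1 := by
  have h := val_const (E := E) v T.c_ne
  rw [← h]
  exact val_eq_of_sub_lt (by rw [h]; exact T.close hk)

lemma xk_succ (hk : k + 1 < L) :
    v (uu s x (k + 1)) * v (uu s x k) = 1 ∧ 1 < v (x (k + 1)) ∧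
      v (x (k + 1)) ^ s = v (uu s x (k + 1)) := by
  have h1 := congrArg v (C.rel k hk)
  rw [map_mul, map_pow, T.xk_val H C (by omega), one_pow] at h1
  have h2 : v (uu s x k) < 1 := (T.u_le H C (by omega) le_rfl).trans_lt T.u0
  have h3 : 1 < v (uu s x (k + 1)) := by
    by_contra h
    have := val_mul_lt' (not_lt.1 h) h2
    rw [map_mul] at this
    exact absurd h1 this.ne
  have h4 := H.gt_of_as h3
  exact ⟨h1, h4, (H.as_gt h4).symm⟩

lemma big {i : ℕ} (hki : k < i) (hi : i < L) : 1 < v (x i) := by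
  induction i, hki using Nat.le_induction with
  | base => exact (T.xk_succ H C hi).2.1
  | succ i hki ih =>
    have ih := ih (by omega)
    have h1 := congrArg v (C.rel i hi)
    rw [map_mul, show uu s x i = x i ^ s + x i from rfl, H.as_gt ih, map_pow, pow_succ',
      mul_left_inj' (by rw [← map_pow]; exact (map_ne_zero v).2 (pow_ne_zero _ (C.x_ne H (by omega))))]
      at h1
    exact H.gt_of_as (by rw [← show uu s x (i + 1) = x (i + 1) ^ s + x (i + 1) from rfl, h1]; exact ih)

lemma u_big {i : ℕ} (hki : k < i) (hi : i < L) : v (uu s x i) = v (x i) ^ s :=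
  H.as_gt (T.big H C hki hi)

lemma u_big_succ {i : ℕ} (hki : k < i) (hi : i + 1 < L) : v (uu s x (i + 1)) = v (x i) := by
  have h1 := congrArg v (C.rel i hi)
  rwa [map_mul, T.u_big H C hki (by omega), map_pow, pow_succ', mul_left_inj'] at h1
  rw [← map_pow]; exact (map_ne_zero v).2 (pow_ne_zero _ (C.x_ne H (by omega)))

lemma big_succ_le {i : ℕ} (hki : k < i) (hi : i + 1 < L) : v (x (i + 1)) ≤ v (x i) := by
  rw [← T.u_big_succ H C hki hi, T.u_big H C (by omega) hi]
  exact le_self_pow₀ (T.big H C (by omega) hi).le H.ne_zero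

lemma big_anti {i j : ℕ} (hki : k < i) (hij : i ≤ j) (hj : j < L) : v (x j) ≤ v (x i) := by
  induction j, hij using Nat.le_induction with
  | base => exact le_rfl
  | succ j hij ih => exact (T.big_succ_le H C (by omega) hj).trans (ih (by omega))

/-- Telescoping: `∏_{i<m} (1 + x_i ^ (s-1))` cancels the pole of `x_m ^ s` beyond the type. -/
lemma prod_val {m : ℕ} (hkm : k < m) (hm : m < L) :
    v (∏ i ∈ Finset.range m, (1 + x i ^ (s - 1))) * v (x m) ^ s = 1 := by
  have hs := H.three_le
  induction m, hkm using Nat.le_induction with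
  | base =>
    rw [Finset.prod_range_succ, map_mul, map_prod, Finset.prod_eq_one, one_mul,
      (T.xk_succ H C hm).2.2, ← map_mul, C.one_add_mul H hm, map_pow, T.xk_val H C (by omega),
      one_pow]
    intro i hi
    exact val_one_add (val_pow_lt (T.small i (Finset.mem_range.1 hi)) (by omega))
  | succ m hkm ih =>
    rw [← ih (by omega), Finset.prod_range_succ, map_mul, mul_assoc]
    congr 1
    rw [← T.u_big H C (by omega) hm, ← map_mul, C.one_add_mul H hm, map_pow]

lemma et_x {j : ℕ} (hj : j < L) (hjk : j ≤ k) : Et F s v (uu s x 0) (x j) := by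
  induction j with
  | zero => exact Et.as Et.param
  | succ j ih =>
    have ih := ih (by omega) (by omega)
    have hu : v (1 + x j ^ (s - 1)) = 1 :=
      val_one_add (val_pow_lt (T.small j (by omega)) (by have := H.three_le; omega))
    have hne : 1 + x j ^ (s - 1) ≠ 0 := by intro h; rw [h] at hu; simp at hu
    apply Et.as
    have : uu s x (j + 1) = x j ^ s * (1 + x j ^ (s - 1))⁻¹ := by
      rw [eq_mul_inv_iff_mul_eq₀ hne, ← C.one_add_mul H hj]; ring
    rw [show x (j + 1) ^ s + x (j + 1) = uu s x (j + 1) from rfl, this]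
    exact (ih.pow _).mul ((Et.one.add (ih.pow _)).inv hu)

/-- The element `W = x_{k+i+1} + c² / x_{k-i-1}` satisfies an Artin–Schreier equation, because
`c²` is fixed by `a ↦ a ^ s` and `1 / x_{k-i-1}` is a root of `z ^ s + z = 1 / u_{k-i}`. -/
lemma W_as {i : ℕ} (hik : i < k) (hi : k + i + 1 < L) :
    (x (k + i + 1) + algebraMap F E c ^ 2 * (x (k - i - 1))⁻¹) ^ s +
      (x (k + i + 1) + algebraMap F E c ^ 2 * (x (k - i - 1))⁻¹) =
    uu s x (k + i + 1) + algebraMap F E c ^ 2 * (uu s x (k - i))⁻¹ := by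
  have hm : k - i - 1 < L := by omega
  have h1 : (uu s x (k - i))⁻¹ = uu s x (k - i - 1) * (x (k - i - 1))⁻¹ ^ (s + 1) := by
    rw [← C.u_succ_inv H (by omega), show k - i - 1 + 1 = k - i by omega]
  rw [h1, H.add_pow, mul_pow, ← pow_mul, mul_comm 2 s, pow_mul,
    T.c_pow H C (by omega), show (-algebraMap F E c) ^ 2 = algebraMap F E c ^ 2 by ring]
  rw [inv_as_eq (C.x_ne H hm)]
  ring

/-- The polar part of `u_{k+i+1}` is `-c² / u_{k-i}`: the sum of `u_{k+i+1}` and `c² / u_{k-i}` is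
étale over `u_0`. By `W_as` the polar part of `x_{k+i+1}` is then `-c² / x_{k-i-1}`, which already
lies in the field of the first terms: the wild ramification cancels. -/
lemma et_S {i : ℕ} (hik : i ≤ k) (hi : k + i + 1 < L) :
    Et F s v (uu s x 0) (uu s x (k + i + 1) + algebraMap F E c ^ 2 * (uu s x (k - i))⁻¹) := by
  have hs := H.three_le
  obtain ⟨r, rfl⟩ : ∃ r, s = r + 2 := ⟨s - 2, by omega⟩
  have hcE : Et F (r + 2) v (uu (r + 2) x 0) (algebraMap F E c) := Et.const c
  induction i with
  | zero =>
    set a := algebraMap F E c with ha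
    have hk : k < L := by omega
    have hcp := T.c_pow H C hk
    rw [← ha] at hcp
    have hxi : Et F (r + 2) v (uu (r + 2) x 0) (x k - a) := (T.et_x H C hk le_rfl).sub hcE
    have hu : v (1 + (x k - a) ^ (r + 1)) = 1 :=
      val_one_add (val_pow_lt (T.close hk) (by omega))
    have hne : 1 + (x k - a) ^ (r + 1) ≠ 0 := by intro h; rw [h] at hu; simp at hu
    have huk := C.ne k hk
    have e1 := T.xi_as H C hk
    rw [← ha] at e1
    have e2 : uu (r + 2) x (k + 0 + 1) + a ^ 2 * (uu (r + 2) x (k - 0))⁻¹ =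
        ((x k - a) ^ (r + 2) + a * (x k - a) ^ (r + 1) - a) * (1 + (x k - a) ^ (r + 1))⁻¹ := by
      rw [eq_mul_inv_iff_mul_eq₀ hne, Nat.sub_zero, Nat.add_zero, C.u_succ H (by omega)]
      exact S_zero_identity (by ring) (by rw [H.sub_pow, hcp]; ring) e1.symm huk
    rw [e2]
    exact (((hxi.pow _).add (hcE.mul (hxi.pow _))).sub hcE).mul ((Et.one.add (hxi.pow _)).inv hu)
  | succ i ih =>
    have ihS := ih (by omega) (by omega)
    have hW := Et.as ((T.W_as H C (i := i) (by omega) (by omega)).symm ▸ ihS)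
    set a := algebraMap F E c with ha
    have hm : k - i - 1 < L := by omega
    have hxT := T.et_x H C hm (by omega)
    have hxs := T.small (k - i - 1) (by omega)
    have hx0 := C.x_ne H hm
    set y := x (k - i - 1) with hy
    set W := x (k + i + 1) + a ^ 2 * y⁻¹ with hWdef
    have hva : v a = 1 := val_const v T.c_ne
    have hνT : Et F (r + 2) v (uu (r + 2) x 0) (W * y - a ^ 2) := (hW.mul hxT).sub (hcE.pow 2)
    have hν : v (W * y - a ^ 2) = 1 := by
      have h1 : v (W * y) < 1 := val_mul_lt' (hW.le_one H T.u0.le) hxs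
      rw [Valuation.map_sub_eq_of_lt_right v (by rw [map_pow, hva, one_pow]; exact h1), map_pow, hva,
        one_pow]
    set ν := W * y - a ^ 2 with hνd
    have hd1 : v (ν ^ (r + 1) + y ^ (r + 1)) = 1 := by
      rw [Valuation.map_add_eq_of_lt_left v, map_pow, hν, one_pow]
      rw [map_pow v ν, hν, one_pow]; exact val_pow_lt hxs (by omega)
    have hd2 : v (1 + y ^ (r + 1)) = 1 := val_one_add (val_pow_lt hxs (by omega))
    have hne1 : ν ^ (r + 1) + y ^ (r + 1) ≠ 0 := by intro h; rw [h] at hd1; simp at hd1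
    have hne2 : 1 + y ^ (r + 1) ≠ 0 := by intro h; rw [h] at hd2; simp at hd2
    have e2 : uu (r + 2) x (k + (i + 1) + 1) + a ^ 2 * (uu (r + 2) x (k - (i + 1)))⁻¹ =
        (ν ^ (r + 1) * W + y ^ r * (ν ^ (r + 2) + a ^ 2)) *
          (ν ^ (r + 1) + y ^ (r + 1))⁻¹ * (1 + y ^ (r + 1))⁻¹ := by
      have hX0 := C.x_ne H (j := k + i + 1) (by omega)
      have hXu : x (k + i + 1) ^ (r + 2) + x (k + i + 1) ≠ 0 := C.ne (k + i + 1) (by omega)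
      have hν' : ν = x (k + i + 1) * y := by rw [hνd, hWdef]; field_simp; ring
      rw [show k + (i + 1) + 1 = (k + i + 1) + 1 by ring, show k - (i + 1) = k - i - 1 by omega,
        C.u_succ H (by omega), hν']
      refine S_succ_identity hX0 hx0 ?_ hne2
      intro h
      apply hXu
      rw [show r + 2 = r + 1 + 1 by ring, pow_succ]
      linear_combination x (k + i + 1) * h
    rw [e2]
    exact ((((hνT.pow _).mul hW).add ((hxT.pow _).mul ((hνT.pow _).add (hcE.pow 2)))).mul
      (((hνT.pow _).add (hxT.pow _)).inv hd1)).mul ((Et.one.add (hxT.pow _)).inv hd2)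

lemma et_W {i : ℕ} (hik : i < k) (hi : k + i + 1 < L) :
    Et F s v (uu s x 0) (x (k + i + 1) + algebraMap F E c ^ 2 * (x (k - i - 1))⁻¹) :=
  Et.as (by rw [T.W_as H C hik hi]; exact T.et_S H C hik.le hi)

end TypeAt

end Local

end ChainSec
end GS
set_option linter.unusedSectionVars false
namespace GS

/-! ### Removing the poles of an Artin–Schreier root -/

section LocSec

variable {F E : Type*} [Field F] [Fintype F] [Field E] [Algebra F E] {s : ℕ}
variable {x : ℕ → E} {L : ℕ}

/-- Where `x_l` is small, the pole of `x_{2l+1}` is bounded by a fixed power of `1 / x_l`. -/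
lemma exists_pole_bound (H : Setup F E s) (C : Chain s x L) {l : ℕ} (hl : 2 * l + 1 < L) :
    ∃ N, ∀ n, N ≤ n → ∀ A : ValuationSubring E, A.valuation (x l) < 1 →
      A.valuation (x l ^ n * x (2 * l + 1)) ≤ 1 := by
  set S : Set (ValuationSubring E) := {A | A.valuation (x l) < 1} with hS
  have hϖ : ∀ A ∈ S, A.valuation (x l) ≤ 1 := fun A hA => le_of_lt hA
  have h0 := C.x_ne H (j := l) (by omega)
  have h1 : x l ∈ bdAlg F S (x l) hϖ := ⟨0, fun A hA => by simpa using hϖ A hA⟩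
  have h2 : (uu s x l)⁻¹ ∈ bdAlg F S (x l) hϖ := by
    refine ⟨1, fun A hA => ?_⟩
    rw [pow_one, map_mul, map_inv₀, show uu s x l = x l ^ s + x l from rfl, H.as_lt hA,
      mul_inv_cancel₀ ((map_ne_zero _).2 h0)]
  have h3 := (C.x_mem_of_as H (fun w => as_mem_bdAlg H hϖ) h1 h2
    (j := 2 * l + 1) (by omega) hl).1
  exact exists_mem_bdAlg hϖ h3

/-- An element `τ_l` that is integral at every type except type `l`, where its polar part is
`x_{2l+1} / c²` (if `2 l + 1 < L`; otherwise it is integral there as well). It is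
`π ^ (e+1) x_l ^ e x_{2l+1}` with `π = ∏_{i<l} (1 + x_i ^ (s-1))` and a large exponent `e`: at types
above `l` the zero of `x_l` removes the pole, at types below `l` the zero of `π` does (`prod_val`),
and at type `l` one has `π ≡ 1` and `x_l ^ e ≡ c⁻²`. -/
lemma exists_tau (H : Setup F E s) (C : Chain s x L) (l : ℕ) :
    ∃ τ ∈ chainAlg F s x L, ∀ (A : ValuationSubring E) (k : ℕ) (c : F),
      TypeAt A.valuation s x L k c →
      ((l ≠ k ∨ L ≤ 2 * l + 1) → A.valuation τ ≤ 1) ∧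
      (l = k → 2 * l + 1 < L →
        A.valuation (τ - x (2 * k + 1) * (algebraMap F E c ^ 2)⁻¹) ≤ 1) := by
  have hs := H.three_le
  by_cases hl : 2 * l + 1 < L
  swap
  · exact ⟨0, zero_mem _, fun A k c T => ⟨fun _ => by simp, fun _ h => absurd h hl⟩⟩
  obtain ⟨N, hN⟩ := exists_pole_bound H C hl
  -- The exponent `e` satisfies `c ^ e = c⁻²` for every `c` with `c ^ (s-1) = -1`.
  obtain ⟨e, he, hNe⟩ : ∃ e, e + 2 = 2 * (s - 1) * (N + 1) ∧ N ≤ e := by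
    have h1 : 2 * (s - 1) * (N + 1) ≥ 4 * (N + 1) := by
      apply Nat.mul_le_mul_right; omega
    exact ⟨2 * (s - 1) * (N + 1) - 2, by omega, by omega⟩
  set π := ∏ i ∈ Finset.range l, (1 + x i ^ (s - 1)) with hπ
  have hπmem : π ∈ chainAlg F s x L := by
    refine prod_mem fun i hi => add_mem (one_mem _) (pow_mem (x_mem_chainAlg ?_) _)
    have := Finset.mem_range.1 hi; omega
  refine ⟨π ^ (e + 1) * (x l ^ e * x (2 * l + 1)),
    mul_mem (pow_mem hπmem _) (mul_mem (pow_mem (x_mem_chainAlg (by omega)) _)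
      (x_mem_chainAlg hl)), fun A k c T => ⟨fun h => ?_, ?_⟩⟩
  · have hlk : l ≠ k := by
      rcases h with h | h
      · exact h
      · omega
    rcases lt_or_gt_of_ne hlk with hlk | hlk
    · have hπ1 : A.valuation π ≤ 1 := by
        rw [hπ, map_prod]
        refine Finset.prod_le_one' fun i hi => ?_
        have hi := Finset.mem_range.1 hi
        exact (val_one_add (val_pow_lt (T.small i (by omega)) (by omega))).le
      exact val_mul_le (val_pow_le hπ1 _) (hN e hNe A (T.small l hlk))
    · have h1 := T.prod_val H C hlk (by omega)
      have h2 := T.big_anti H C hlk (j := 2 * l + 1) (by omega) hl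
      have h3 := T.big H C hlk (by omega)
      rw [← hπ] at h1
      rw [map_mul, map_pow, map_mul, map_pow]
      calc A.valuation π ^ (e + 1) * (A.valuation (x l) ^ e * A.valuation (x (2 * l + 1)))
          ≤ A.valuation π ^ (e + 1) * (A.valuation (x l) ^ e * A.valuation (x l)) := by gcongr
        _ = A.valuation π ^ (e + 1) * A.valuation (x l) ^ (e + 1) := by rw [pow_succ (A.valuation (x l))]
        _ ≤ A.valuation π ^ (e + 1) * A.valuation (x l) ^ (s * (e + 1)) := by
            gcongr
            · exact h3.le
            · exact Nat.le_mul_of_pos_left _ (by omega)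
        _ = 1 := by rw [pow_mul, ← mul_pow, h1, one_pow]
  · rintro rfl -
    have hl' : l < L := by omega
    set a := algebraMap F E c with ha
    have hva : A.valuation a = 1 := val_const _ T.c_ne
    have ha0 : a ≠ 0 := by intro h; rw [h] at hva; simp at hva
    set g := A.valuation (uu s x 0) with hg
    have hg1 : g < 1 := T.u0
    have hu0 : uu s x 0 ≠ 0 := C.ne 0 (by omega)
    -- congruences modulo `u_0`
    have hcong : ∀ p q r t : E, A.valuation p ≤ 1 → A.valuation t ≤ 1 →
        A.valuation (p - q) ≤ g → A.valuation (r - t) ≤ g →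
        A.valuation (p * r - q * t) ≤ g := by
      intro p q r t hp ht h1 h2
      rw [show p * r - q * t = p * (r - t) + (p - q) * t by ring]
      refine val_add_le ?_ ?_
      · rw [map_mul]; exact mul_le_of_le_one_of_le hp h2
      · rw [map_mul]; exact mul_le_of_le_of_le_one h1 ht
    have hpow : ∀ p q : E, A.valuation p ≤ 1 → A.valuation q ≤ 1 → A.valuation (p - q) ≤ g →
        ∀ n : ℕ, A.valuation (p ^ n - q ^ n) ≤ g := by
      intro p q hp hq h n
      induction n with
      | zero => simp
      | succ n ih => rw [pow_succ, pow_succ]; exact hcong _ _ _ _ (val_pow_le hp n) hq ih h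
    have hsm : ∀ i < l, A.valuation (x i) ≤ g := fun i hi => T.x_le H C hi
    have hπ1 : A.valuation π ≤ 1 ∧ A.valuation (π - 1) ≤ g := by
      rw [hπ]
      have : ∀ m ≤ l, A.valuation (∏ i ∈ Finset.range m, (1 + x i ^ (s - 1))) ≤ 1 ∧
          A.valuation (∏ i ∈ Finset.range m, (1 + x i ^ (s - 1)) - 1) ≤ g := by
        intro m hm
        induction m with
        | zero => simp
        | succ m ih =>
          obtain ⟨i1, i2⟩ := ih (by omega)
          have h1 : A.valuation (x m ^ (s - 1)) ≤ g := by
            rw [map_pow]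
            exact (pow_le_of_le_one zero_le (T.small m (by omega)).le (by omega)).trans
              (hsm m (by omega))
          have h2 : A.valuation (1 + x m ^ (s - 1)) = 1 := val_one_add (h1.trans_lt hg1)
          rw [Finset.prod_range_succ]
          refine ⟨val_mul_le i1 h2.le, ?_⟩
          have := hcong _ _ _ 1 i1 (by simp) i2 (show A.valuation (1 + x m ^ (s - 1) - 1) ≤ g by
            rwa [add_sub_cancel_left])
          simpa using this
      exact this l le_rfl
    have h1 : A.valuation (π ^ (e + 1) - 1 ^ (e + 1)) ≤ g := hpow _ _ hπ1.1 (by simp) hπ1.2 _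
    have h2 : A.valuation (x l ^ e - a ^ e) ≤ g :=
      hpow _ _ (T.xk_val H C hl').le hva.le (T.xi_le H C hl') _
    have hae : a ^ e = (a ^ 2)⁻¹ := by
      rw [← mul_eq_one_iff_eq_inv₀ (pow_ne_zero _ ha0), ← pow_add, he, pow_mul, mul_comm 2, pow_mul]
      have h3 : a ^ (s - 1) = -1 := by
        have h4 := T.c_pow H C hl'
        rw [← ha, show s = (s - 1) + 1 by omega, pow_succ] at h4
        apply mul_right_cancel₀ ha0
        linear_combination h4
      rw [h3]; norm_num
    have h3 := hcong _ _ _ _ (val_pow_le hπ1.1 (e + 1)) (val_pow_le hva.le e) h1 h2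
    rw [one_pow, one_mul, hae] at h3
    have h4 : g * A.valuation (x (2 * l + 1)) ≤ 1 := by
      have h5 : A.valuation (uu s x 0 * uu s x (2 * l + 1)) ≤ 1 := by
        have h6 := (T.et_S H C (i := l) le_rfl (by omega)).le_one H T.u0.le
        rw [← ha, Nat.sub_self, show l + l + 1 = 2 * l + 1 by ring] at h6
        have : uu s x 0 * uu s x (2 * l + 1) =
            uu s x 0 * (uu s x (2 * l + 1) + a ^ 2 * (uu s x 0)⁻¹) - a ^ 2 := by
          linear_combination -(a ^ 2) * mul_inv_cancel₀ hu0
        rw [this]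
        exact val_sub_le (val_mul_le T.u0.le h6) (val_pow_le hva.le 2)
      rw [map_mul, T.u_big H C (by omega) hl] at h5
      refine le_trans ?_ h5
      rw [hg]
      gcongr
      exact le_self_pow₀ (T.big H C (by omega) hl).le H.ne_zero
    rw [show π ^ (e + 1) * (x l ^ e * x (2 * l + 1)) - x (2 * l + 1) * (a ^ 2)⁻¹ =
      (π ^ (e + 1) * x l ^ e - (a ^ 2)⁻¹) * x (2 * l + 1) by ring, map_mul]
    exact le_trans (by gcongr) h4

/-- Near the zeros of `u_0`, a root `w` of `w ^ s + w = 1 / u_0` can be shifted by an element of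
the chain algebra to make its pole harmless: multiplication by a power of `w - Y` with exponent
`< s` keeps elements of the chain algebra that are small at `A` small. Writing `k` for the type,
either `w - Y` is integral, or the chain algebra is unramified over `u_0` and the pole of `w - Y`
has order at most `1 / s` relative to `u_0`. -/
theorem exists_shift (H : Setup F E s) (C : Chain s x L) (hL : 0 < L) :
    ∃ Y ∈ chainAlg F s x L, ∀ (A : ValuationSubring E), A.valuation (uu s x 0) < 1 →
      ∀ w : E, w ^ s + w = (uu s x 0)⁻¹ → ∀ ε ∈ chainAlg F s x L, A.valuation ε < 1 →
      ∀ i < s, A.valuation (ε * (w - Y) ^ i) < 1 := by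
  choose τ hτ hτ' using exists_tau H C
  refine ⟨-∑ l ∈ Finset.range L, τ l, neg_mem (sum_mem fun l _ => hτ l), ?_⟩
  intro A hA w hw ε hε hε1 i hi
  set Y := -∑ l ∈ Finset.range L, τ l with hY
  have hu0 : uu s x 0 ≠ 0 := C.ne 0 hL
  by_cases hwY : A.valuation (w - Y) ≤ 1
  · exact val_mul_lt hε1 (val_pow_le hwY _)
  have hwY := not_le.1 hwY
  obtain ⟨k, c, T⟩ := exists_type H C hA
  have hτk := fun l => hτ' l A k c T
  set a := algebraMap F E c with ha
  have hva : A.valuation a = 1 := val_const _ T.c_ne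
  have ha0 : a ≠ 0 := by intro h; rw [h] at hva; simp at hva
  rcases lt_or_ge (2 * k + 1) L with hk | hk
  · -- here `w` has the polar part `- x_{2k+1} / c²`, which `Y` removes, so `w - Y` is integral
    exfalso
    refine absurd hwY (not_lt.2 (H.le_of_as ?_))
    have hr : A.valuation (Y + x (2 * k + 1) * (a ^ 2)⁻¹) ≤ 1 := by
      have hkL : k ∈ Finset.range L := Finset.mem_range.2 (by omega)
      rw [hY, ← Finset.add_sum_erase _ _ hkL,
        show -(τ k + ∑ l ∈ (Finset.range L).erase k, τ l) + x (2 * k + 1) * (a ^ 2)⁻¹ =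
          -(τ k - x (2 * k + 1) * (a ^ 2)⁻¹) - ∑ l ∈ (Finset.range L).erase k, τ l by ring]
      refine val_sub_le ?_ ?_
      · rw [Valuation.map_neg]; exact (hτk k).2 rfl hk
      · refine Valuation.map_sum_le _ fun l hl => ?_
        exact (hτk l).1 (Or.inl (Finset.ne_of_mem_erase hl))
    set r := Y + x (2 * k + 1) * (a ^ 2)⁻¹ with hr'
    have h6 := (T.et_S H C (i := k) le_rfl (by omega)).le_one H T.u0.le
    rw [← ha, Nat.sub_self, show k + k + 1 = 2 * k + 1 by ring] at h6
    have h7 : (w - Y) ^ s + (w - Y) =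
        (uu s x (2 * k + 1) + a ^ 2 * (uu s x 0)⁻¹) * (a ^ 2)⁻¹ - (r ^ s + r) := by
      have h8 : w - Y = w + x (2 * k + 1) * (a ^ 2)⁻¹ - r := by rw [hr']; ring
      have h9 : ((a ^ 2)⁻¹) ^ s = (a ^ 2)⁻¹ := by
        rw [inv_pow, ← pow_mul, mul_comm 2, pow_mul, T.c_pow H C (by omega)]; simp [ha]
      have h10 : (uu s x 0)⁻¹ = a ^ 2 * (uu s x 0)⁻¹ * (a ^ 2)⁻¹ := by
        field_simp
      rw [h8, H.sub_pow, H.add_pow, mul_pow, h9, add_mul, ← h10, ← hw]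
      ring
    rw [h7]
    refine val_sub_le (val_mul_le h6 ?_) (H.as_le hr)
    rw [map_inv₀, map_pow, hva]; simp
  · -- here the chain algebra is étale over `F[u_0, 1/u_0]`
    have hYv : A.valuation Y ≤ 1 := by
      rw [hY, Valuation.map_neg]
      refine Valuation.map_sum_le _ fun l _ => (hτk l).1 ?_
      by_cases h : l = k
      · right; omega
      · left; exact h
    have hX : A.valuation (uu s x 0) < 1 := hA
    have hle : chainAlg F s x L ≤ Et.loc F s A.valuation (uu s x 0) := by
      have hui : (uu s x 0)⁻¹ ∈ Et.loc F s A.valuation (uu s x 0) := Et.inv_param_mem_loc hu0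
      have hx1 : ∀ j < L, j ≤ k → x j ∈ Et.loc F s A.valuation (uu s x 0) :=
        fun j hj hjk => Et.mem_loc (T.et_x H C hj hjk)
      have C' : Chain s x (min L (k + 1)) :=
        ⟨fun j hj => C.ne j (by omega), fun j hj => C.rel j (by omega)⟩
      have hinv : ∀ j < L, j ≤ k → (x j)⁻¹ ∈ Et.loc F s A.valuation (uu s x 0) := by
        intro j hj hjk
        exact (C'.mem_of_u_inv H (a := 0) (fun i hi _ => hx1 i (by omega) (by omega)) hui
          (Nat.zero_le j) (by omega)).1
      refine C.chainAlg_le H (fun j hj => ?_) hui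
      rcases le_or_gt j k with hjk | hjk
      · exact hx1 j hj hjk
      · obtain ⟨i, rfl⟩ : ∃ i, j = k + i + 1 := ⟨j - k - 1, by omega⟩
        have hW := Et.mem_loc (T.et_W H C (i := i) (by omega) hj)
        have h1 := hinv (k - i - 1) (by omega) (by omega)
        have h2 : algebraMap F E c ^ 2 ∈ Et.loc F s A.valuation (uu s x 0) :=
          pow_mem (Subalgebra.algebraMap_mem _ c) 2
        have := sub_mem hW (mul_mem h2 h1)
        rwa [add_sub_cancel_right] at this
    obtain ⟨N, hN⟩ := hle hε
    have hε2 := hN.le_param H hX hu0 hε1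
    set V := A.valuation (w - Y) with hV
    have h1 : V ^ s * A.valuation (uu s x 0) ≤ 1 := by
      rw [← H.as_gt hwY, ← map_mul]
      have : ((w - Y) ^ s + (w - Y)) * uu s x 0 = 1 - (Y ^ s + Y) * uu s x 0 := by
        rw [H.sub_pow, show w ^ s - Y ^ s + (w - Y) = (w ^ s + w) - (Y ^ s + Y) by ring, hw,
          sub_mul, inv_mul_cancel₀ hu0]
      rw [this]
      exact val_sub_le (by simp) (val_mul_le (H.as_le hYv) hX.le)
    have h2 : V ^ i < V ^ s := pow_lt_pow_right₀ hwY hi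
    rw [map_mul, map_pow, ← hV]
    calc A.valuation ε * V ^ i ≤ A.valuation (uu s x 0) * V ^ i := by gcongr
      _ < A.valuation (uu s x 0) * V ^ s :=
        mul_lt_mul_of_pos_left h2 ((Valuation.pos_iff _).2 hu0)
      _ ≤ 1 := by rwa [mul_comm]

end LocSec
end GS
set_option linter.unusedSectionVars false
namespace GS

/-! ### The tower -/

section TowerSec

variable {F E : Type*} [Field F] [Fintype F] [Field E] [Algebra F E] {s : ℕ}

/-- The (ascending) recursive tower: `z = 1 / y_{k+1}` solves `z ^ s + z = 1 / u_k`, where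
`u_k = y_k ^ s + y_k`. -/
structure Tower (s : ℕ) (y : ℕ → E) : Prop where
  ne0 : uu s y 0 ≠ 0
  rel : ∀ k, (y (k + 1))⁻¹ ^ s + (y (k + 1))⁻¹ = (uu s y k)⁻¹

/-- The algebra `F[y_k, 1/y_k, 1/u_k : k ≤ n]`. -/
def towerAlg (F : Type*) {E : Type*} [Field F] [Fintype F] [Field E] [Algebra F E] (s : ℕ)
    (y : ℕ → E) (n : ℕ) : Subalgebra F E :=
  chainAlg F s (fun j => y (n - j)) (n + 1)

variable {y : ℕ → E}

lemma y_mem {n k : ℕ} (h : k ≤ n) : y k ∈ towerAlg F s y n := by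
  have := x_mem_chainAlg (F := F) (s := s) (x := fun j => y (n - j)) (L := n + 1) (j := n - k)
    (by omega)
  simpa [towerAlg, Nat.sub_sub_self h] using this

lemma y_inv_mem {n k : ℕ} (h : k ≤ n) : (y k)⁻¹ ∈ towerAlg F s y n := by
  have := x_inv_mem_chainAlg (F := F) (s := s) (x := fun j => y (n - j)) (L := n + 1) (j := n - k)
    (by omega)
  simpa [towerAlg, Nat.sub_sub_self h] using this

lemma u_mem {n k : ℕ} (h : k ≤ n) : uu s y k ∈ towerAlg F s y n :=
  add_mem (pow_mem (y_mem h) _) (y_mem h)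

lemma u_inv_mem {n k : ℕ} (h : k ≤ n) : (uu s y k)⁻¹ ∈ towerAlg F s y n := by
  have := u_inv_mem_chainAlg (F := F) (s := s) (x := fun j => y (n - j)) (L := n + 1) (j := n - k)
    (by omega)
  simpa [towerAlg, uu, Nat.sub_sub_self h] using this

/-- The `F`-algebra of values at `z` of polynomials with coefficients in `B`. -/
noncomputable def polyRange (B : Subalgebra F E) (z : E) : Subalgebra F E :=
  ((Polynomial.aeval z : Polynomial B →ₐ[B] E).restrictScalars F).range

lemma self_mem_polyRange (B : Subalgebra F E) (z : E) : z ∈ polyRange B z :=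
  ⟨Polynomial.X, by simp⟩

lemma le_polyRange (B : Subalgebra F E) (z : E) : B ≤ polyRange B z :=
  fun g hg => ⟨Polynomial.C ⟨g, hg⟩, by simp⟩

/-- Powers of `z` are reduced by division by the monic polynomial `X ^ s + X - b`. -/
lemma exists_degreeLT {B : Subalgebra F E} {z : E} (hs : 1 < s) (b : B)
    (hz : z ^ s + z = (b : E)) {f : E} (hf : f ∈ polyRange B z) :
    ∃ P ∈ Polynomial.degreeLT B s, Polynomial.aeval z P = f := by
  obtain ⟨P, rfl⟩ := hf
  have hdeg : (Polynomial.X - Polynomial.C b).degree < (s : WithBot ℕ) := by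
    rw [Polynomial.degree_X_sub_C]
    exact_mod_cast hs
  have hmon : (Polynomial.X ^ s + (Polynomial.X - Polynomial.C b)).Monic :=
    Polynomial.monic_X_pow_add hdeg
  have hMd : (Polynomial.X ^ s + (Polynomial.X - Polynomial.C b)).degree =
      (s : WithBot ℕ) := by
    rw [Polynomial.degree_add_eq_left_of_degree_lt] <;> rw [Polynomial.degree_X_pow]
    exact hdeg
  have hMz : Polynomial.aeval z (Polynomial.X ^ s + (Polynomial.X - Polynomial.C b)) = 0 := by
    simp only [map_add, map_sub, map_pow, Polynomial.aeval_X, Polynomial.aeval_C]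
    change z ^ s + (z - (b : E)) = 0
    rw [← hz]; ring
  refine ⟨P %ₘ (Polynomial.X ^ s + (Polynomial.X - Polynomial.C b)), ?_, ?_⟩
  · rw [Polynomial.mem_degreeLT, ← hMd]
    exact Polynomial.degree_modByMonic_lt P hmon
  · exact Polynomial.aeval_modByMonic_eq_self_of_root hMz

namespace Tower

variable (H : Setup F E s) (T : Tower s y)
include H T

lemma y_ne_of {k : ℕ} (h : uu s y k ≠ 0) : y k ≠ 0 := by
  rintro h0; simp [uu, h0, H.zero_pow] at h

lemma mul_eq_aux {k : ℕ} (h : uu s y k ≠ 0) :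
    y (k + 1) ≠ 0 ∧ uu s y (k + 1) * uu s y k = y (k + 1) ^ (s + 1) := by
  have hr := T.rel k
  have hy : y (k + 1) ≠ 0 := by
    intro h0
    rw [h0, inv_zero, H.zero_pow, add_zero] at hr
    exact h (inv_eq_zero.1 hr.symm)
  refine ⟨hy, ?_⟩
  rw [← inv_as_eq hy, inv_pow] at hr
  have h2 : y (k + 1) ^ (s + 1) ≠ 0 := pow_ne_zero _ hy
  change uu s y (k + 1) * (y (k + 1) ^ (s + 1))⁻¹ = _ at hr
  field_simp at hr
  linear_combination hr

lemma u_ne (k : ℕ) : uu s y k ≠ 0 := by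
  induction k with
  | zero => exact T.ne0
  | succ k ih =>
    obtain ⟨h1, h2⟩ := T.mul_eq_aux H ih
    intro h
    rw [h, zero_mul] at h2
    exact pow_ne_zero _ h1 h2.symm

lemma y_ne (k : ℕ) : y k ≠ 0 := T.y_ne_of H (T.u_ne H k)

lemma mul_eq (k : ℕ) : uu s y (k + 1) * uu s y k = y (k + 1) ^ (s + 1) :=
  (T.mul_eq_aux H (T.u_ne H k)).2

lemma chain (n : ℕ) : Chain s (fun j => y (n - j)) (n + 1) where
  ne j hj := T.u_ne H (n - j)
  rel j hj := by
    have := T.mul_eq H (n - (j + 1))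
    rw [show n - (j + 1) + 1 = n - j by omega] at this
    rw [← this, mul_comm]

lemma le_of_as {S : Subalgebra F E} (hS : ∀ w : E, w ^ s + w ∈ S → w ∈ S) {n : ℕ}
    (h1 : y n ∈ S) (h2 : (uu s y n)⁻¹ ∈ S) : towerAlg F s y n ≤ S :=
  (T.chain H n).chainAlg_le_of_as H hS (by simpa using h1) (by simpa [uu] using h2)

lemma le_of_mem {S : Subalgebra F E} {n : ℕ}
    (h1 : ∀ k ≤ n, y k ∈ S) (h2 : (uu s y n)⁻¹ ∈ S) : towerAlg F s y n ≤ S :=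
  (T.chain H n).chainAlg_le H (fun j _ => h1 _ (by omega)) (by simpa [uu] using h2)

lemma bound {S : Set (ValuationSubring E)} {ϖ : E} (hϖ : ∀ A ∈ S, A.valuation ϖ ≤ 1) {n : ℕ}
    {M : ℕ} (h1 : ∀ A ∈ S, A.valuation (ϖ ^ M * y n) ≤ 1)
    (h2 : ∀ A ∈ S, A.valuation (ϖ ^ M * (uu s y n)⁻¹) ≤ 1) {f : E} (hf : f ∈ towerAlg F s y n) :
    ∃ N : ℕ, ∀ m, N ≤ m → ∀ A ∈ S, A.valuation (ϖ ^ m * f) ≤ 1 :=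
  exists_mem_bdAlg (F := F) hϖ (T.le_of_as H (fun _ => as_mem_bdAlg H hϖ) ⟨M, h1⟩ ⟨M, h2⟩ hf)

/-- Elements of the `n`-th algebra have poles only at zeros of `u_n` and at poles of `y_n`. -/
lemma integral {n : ℕ} {A : ValuationSubring E} (h1 : A.valuation (y n) ≤ 1)
    (h2 : 1 ≤ A.valuation (uu s y n)) {f : E} (hf : f ∈ towerAlg F s y n) :
    A.valuation f ≤ 1 := by
  obtain ⟨N, hN⟩ := T.bound H (S := {A}) (ϖ := 1) (by simp) (n := n) (M := 0)
    (by simpa using h1) (by simpa using inv_le_one_of_one_le₀ h2) hf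
  simpa using hN N le_rfl A rfl

lemma y_succ (n : ℕ) : y (n + 1) = uu s y n * (1 + (y (n + 1))⁻¹ ^ (s - 1)) := by
  have h := T.rel n
  rw [H.as_fact] at h
  have h1 := T.u_ne H n
  have h2 := T.y_ne H (n + 1)
  rw [inv_mul_eq_iff_eq_mul₀ h2] at h
  rw [h, mul_left_comm, mul_inv_cancel₀ h1, mul_one]

lemma u_succ_inv (n : ℕ) : (uu s y (n + 1))⁻¹ = uu s y n * (y (n + 1))⁻¹ ^ (s + 1) := by
  have h := T.mul_eq H n
  have h1 := T.u_ne H (n + 1)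
  have h2 := T.y_ne H (n + 1)
  rw [inv_pow, ← h, mul_inv]
  rw [mul_left_comm, mul_inv_cancel₀ (T.u_ne H n), mul_one]

/-- Every element of the `(n+1)`-st algebra is a polynomial of degree `< s` in `1 / y_{n+1}` over
the `n`-th one. -/
lemma exists_poly {n : ℕ} {f : E} (hf : f ∈ towerAlg F s y (n + 1)) :
    ∃ P ∈ Polynomial.degreeLT (towerAlg F s y n) s,
      Polynomial.aeval (y (n + 1))⁻¹ P = f := by
  have hs := H.three_le
  have hle : towerAlg F s y (n + 1) ≤ polyRange (towerAlg F s y n) (y (n + 1))⁻¹ := by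
    have hzm := self_mem_polyRange (towerAlg F s y n) (y (n + 1))⁻¹
    apply T.le_of_mem H
    · intro k hk
      rcases Nat.lt_or_ge k (n + 1) with h | h
      · exact le_polyRange _ _ (y_mem (by omega))
      · obtain rfl : k = n + 1 := by omega
        have h2 := mul_mem (le_polyRange _ (y (n + 1))⁻¹ (u_mem (F := F) (s := s) (y := y)
          (le_refl n))) (add_mem (one_mem _) (pow_mem hzm (s - 1)))
        rwa [← T.y_succ H n] at h2
    · rw [T.u_succ_inv H n]
      exact mul_mem (le_polyRange _ _ (u_mem le_rfl)) (pow_mem hzm _)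
  exact exists_degreeLT (by omega) ⟨_, u_inv_mem le_rfl⟩ (T.rel n) (hle hf)

section Val

variable {Γ : Type*} [LinearOrderedCommGroupWithZero Γ] {v : Valuation E Γ}

lemma val_big {k : ℕ} (h : 1 < v (y (k + 1))) :
    v (uu s y k) = v (y (k + 1)) ∧ 1 < v (y k) ∧ v (y k) ^ s = v (y (k + 1)) := by
  have h1 : v (y (k + 1))⁻¹ < 1 := by rw [map_inv₀]; exact inv_lt_one_of_one_lt₀ h
  have h2 := congrArg v (T.rel k)
  rw [H.as_lt h1, map_inv₀, map_inv₀, inv_inj] at h2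
  have h3 := H.gt_of_as (v := v) (w := y k) (by change 1 < v (uu s y k); rw [← h2]; exact h)
  exact ⟨h2.symm, h3, by rw [h2]; exact (H.as_gt h3).symm⟩

lemma val_small {k : ℕ} (h : v (y (k + 1)) < 1) : v (uu s y k) < 1 := by
  have h1 : 1 < v (y (k + 1))⁻¹ := by
    rw [map_inv₀]
    exact (one_lt_inv₀ ((Valuation.pos_iff v).2 (T.y_ne H _))).2 h
  have h2 := congrArg v (T.rel k)
  rw [H.as_gt h1, map_inv₀, map_inv₀, inv_pow, inv_inj] at h2
  rw [← h2, ← map_pow]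
  exact val_pow_lt h H.ne_zero

lemma val_big_le {k n : ℕ} (hk : k ≤ n) (h : 1 < v (y n)) : 1 < v (y k) := by
  induction n, hk using Nat.le_induction with
  | base => exact h
  | succ n hk ih => exact ih (T.val_big H h).2.1

end Val

/-! ### The totally ramified pole -/

/-- Elements obtained from constants and `t` by ring operations, inversion of elements that are
units on the whole set `S` of valuation rings, and roots of `w ^ s + w = g` that are small on
`S`. -/
inductive _root_.GS.EtI (F : Type*) {E : Type*} [Field F] [Fintype F] [Field E] [Algebra F E]
    (s : ℕ) (S : Set (ValuationSubring E)) (t : E) : E → Prop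
  | const (c : F) : EtI F s S t (algebraMap F E c)
  | param : EtI F s S t t
  | add {a b : E} : EtI F s S t a → EtI F s S t b → EtI F s S t (a + b)
  | mul {a b : E} : EtI F s S t a → EtI F s S t b → EtI F s S t (a * b)
  | inv {a : E} : EtI F s S t a → (∀ A ∈ S, A.valuation a = 1) → EtI F s S t a⁻¹
  | as {w : E} : EtI F s S t (w ^ s + w) → (∀ A ∈ S, A.valuation w < 1) → EtI F s S t w

end Tower

namespace EtI

variable {S : Set (ValuationSubring E)} {t : E}

lemma one : EtI F s S t 1 := by simpa using EtI.const (F := F) (s := s) (S := S) (t := t) 1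

lemma zero : EtI F s S t 0 := by simpa using EtI.const (F := F) (s := s) (S := S) (t := t) 0

lemma neg {a : E} (ha : EtI F s S t a) : EtI F s S t (-a) := by
  have := (EtI.const (F := F) (s := s) (S := S) (t := t) (-1)).mul ha
  simpa using this

lemma pow {a : E} (ha : EtI F s S t a) (n : ℕ) : EtI F s S t (a ^ n) := by
  induction n with
  | zero => simpa using EtI.one
  | succ n ih => rw [pow_succ]; exact ih.mul ha

lemma le_one {A : ValuationSubring E} (hA : A ∈ S) (ht : A.valuation t ≤ 1) {a : E}
    (ha : EtI F s S t a) : A.valuation a ≤ 1 := by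
  induction ha with
  | const c => exact val_const_le _ c
  | param => exact ht
  | add _ _ h1 h2 => exact val_add_le h1 h2
  | mul _ _ h1 h2 => exact val_mul_le h1 h2
  | inv _ h _ => rw [map_inv₀, h A hA, inv_one]
  | as _ h => exact (h A hA).le

/-- The residue at the pole is a constant. -/
lemma exists_const (H : Setup F E s) {A : ValuationSubring E} (hA : A ∈ S)
    (ht : A.valuation t < 1) {a : E} (ha : EtI F s S t a) :
    ∃ (c : F) (h : E), EtI F s S t h ∧ a = algebraMap F E c + t * h := by
  have hs := H.three_le
  induction ha with
  | const c => exact ⟨c, 0, zero, by ring⟩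
  | param => exact ⟨0, 1, one, by simp⟩
  | add _ _ h1 h2 =>
    obtain ⟨c, h, hh, rfl⟩ := h1
    obtain ⟨d, k, hk, rfl⟩ := h2
    exact ⟨c + d, h + k, hh.add hk, by rw [map_add]; ring⟩
  | @mul a b ha hb h1 h2 =>
    obtain ⟨c, h, hh, e⟩ := h1
    obtain ⟨d, k, hk, e'⟩ := h2
    refine ⟨c * d, h * b + (algebraMap F E c) * k, (hh.mul hb).add ((const c).mul hk), ?_⟩
    rw [e', e, map_mul]; ring
  | @inv a ha hu h1 =>
    obtain ⟨c, h, hh, e⟩ := h1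
    have hc : c ≠ 0 := by
      rintro rfl
      have h2 := hu A hA
      rw [e, map_zero, zero_add] at h2
      exact absurd h2 (val_mul_lt ht (hh.le_one hA ht.le)).ne
    have hcE : algebraMap F E c ≠ 0 := (map_ne_zero _).2 hc
    have ha0 : a ≠ 0 := by
      intro h0
      have h2 := hu A hA
      rw [h0] at h2; simp at h2
    refine ⟨c⁻¹, -(h * algebraMap F E c⁻¹ * a⁻¹), ((hh.mul (const _)).mul (ha.inv hu)).neg, ?_⟩
    rw [map_inv₀]
    field_simp
    linear_combination -e
  | @as w hw hsm h1 =>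
    obtain ⟨c, h, hh, e⟩ := h1
    have hc : c = 0 := by
      by_contra hc
      have h2 := val_const (E := E) A.valuation hc
      rw [show algebraMap F E c = (w ^ s + w) - t * h by rw [e]; ring] at h2
      refine absurd h2 (ne_of_lt (val_sub_lt ?_ (val_mul_lt ht (hh.le_one hA ht.le))))
      rw [H.as_lt (hsm A hA)]; exact hsm A hA
    have hu : ∀ A ∈ S, A.valuation (1 + w ^ (s - 1)) = 1 := fun A hA =>
      val_one_add (val_pow_lt (hsm A hA) (by omega))
    have hne : 1 + w ^ (s - 1) ≠ 0 := by
      intro h0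
      have := hu A hA
      rw [h0] at this; simp at this
    refine ⟨0, h * (1 + w ^ (s - 1))⁻¹, hh.mul ((one.add ((hw.as hsm).pow _)).inv hu), ?_⟩
    rw [H.as_fact, hc, map_zero, zero_add] at e
    rw [map_zero, zero_add, ← mul_assoc, ← e, mul_assoc, mul_inv_cancel₀ hne, mul_one]

variable (F s S t) in
/-- The localization of the `EtI` elements at `t`. -/
def loc : Subalgebra F E where
  carrier := {f | ∃ N : ℕ, EtI F s S t (t ^ N * f)}
  mul_mem' := by
    rintro a b ⟨N, hN⟩ ⟨M, hM⟩
    exact ⟨N + M, by convert hN.mul hM using 1; ring⟩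
  add_mem' := by
    rintro a b ⟨N, hN⟩ ⟨M, hM⟩
    refine ⟨N + M, ?_⟩
    convert ((param.pow M).mul hN).add ((param.pow N).mul hM) using 1; ring
  algebraMap_mem' c := ⟨0, by simpa using const c⟩

lemma mem_loc {a : E} (ha : EtI F s S t a) : a ∈ loc F s S t := ⟨0, by simpa using ha⟩

/-- An element of the localization that is integral at one member of `S` is an `EtI` element; in
particular it is integral at every member where `t` is small. -/
lemma of_loc (H : Setup F E s) {A : ValuationSubring E} (hA : A ∈ S)
    (ht : A.valuation t < 1) (ht0 : t ≠ 0) {f : E} (hf : f ∈ loc F s S t)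
    (h1 : A.valuation f ≤ 1) : EtI F s S t f := by
  obtain ⟨N, hN⟩ := hf
  induction N with
  | zero => simpa using hN
  | succ N ih =>
    obtain ⟨c, h, hh, e⟩ := hN.exists_const H hA ht
    have hc : c = 0 := by
      by_contra hc
      have h2 := val_const (E := E) A.valuation hc
      rw [show algebraMap F E c = t * (t ^ N * f) - t * h by rw [← mul_assoc, ← pow_succ', e]; ring] at h2
      exact absurd h2 (ne_of_lt (val_sub_lt
        (val_mul_lt ht (val_mul_le (val_pow_le ht.le _) h1))
        (val_mul_lt ht (hh.le_one hA ht.le))))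
    rw [hc, map_zero, zero_add, pow_succ', mul_assoc] at e
    exact ih (by rw [mul_left_cancel₀ ht0 e]; exact hh)

end EtI

namespace Tower

variable (H : Setup F E s) (T : Tower s y)
include H T

/-- At the poles of `y_n` the element `1 / y_0` serves as a common local parameter for the `n`-th
algebra. -/
lemma etI {n k : ℕ} (hk : k ≤ n) :
    EtI F s {A : ValuationSubring E | 1 < A.valuation (y n)} (y 0)⁻¹ (y k)⁻¹ ∧
    EtI F s {A : ValuationSubring E | 1 < A.valuation (y n)} (y 0)⁻¹ (uu s y k)⁻¹ ∧
    y k ∈ EtI.loc F s {A : ValuationSubring E | 1 < A.valuation (y n)} (y 0)⁻¹ := by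
  have hs := H.three_le
  set S := {A : ValuationSubring E | 1 < A.valuation (y n)} with hS
  have hsm : ∀ k ≤ n, ∀ A ∈ S, A.valuation (y k)⁻¹ < 1 := by
    intro k hk A hA
    rw [map_inv₀]; exact inv_lt_one_of_one_lt₀ (T.val_big_le H hk hA)
  have key : ∀ k ≤ n, EtI F s S (y 0)⁻¹ (y k)⁻¹ → EtI F s S (y 0)⁻¹ (uu s y k)⁻¹ := by
    intro k hk h
    have e : (uu s y k)⁻¹ = (y k)⁻¹ ^ s * (1 + (y k)⁻¹ ^ (s - 1))⁻¹ := by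
      have h0 := T.y_ne H k
      obtain ⟨r, rfl⟩ : ∃ r, s = r + 1 := ⟨s - 1, by omega⟩
      simp only [uu, Nat.add_sub_cancel]
      rw [← inv_inj, mul_inv, inv_inv, inv_inv, inv_pow, inv_inv, inv_pow]
      field_simp
      ring
    rw [e]
    exact (h.pow _).mul ((EtI.one.add (h.pow _)).inv fun A hA =>
      val_one_add (val_pow_lt (hsm k hk A hA) (by omega)))
  induction k with
  | zero =>
    refine ⟨EtI.param, key 0 hk EtI.param, 1, ?_⟩
    rw [pow_one, inv_mul_cancel₀ (T.y_ne H 0)]; exact EtI.one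
  | succ k ih =>
    obtain ⟨h1, h2, h3⟩ := ih (by omega)
    have h4 : EtI F s S (y 0)⁻¹ (y (k + 1))⁻¹ :=
      EtI.as (by rw [T.rel k]; exact h2) (hsm _ hk)
    refine ⟨h4, key _ hk h4, ?_⟩
    rw [T.y_succ H k]
    exact mul_mem (add_mem (pow_mem h3 _) h3)
      (add_mem (one_mem _) (pow_mem (EtI.mem_loc h4) _))

lemma mem_etI_loc {n : ℕ} {f : E} (hf : f ∈ towerAlg F s y n) :
    f ∈ EtI.loc F s {A : ValuationSubring E | 1 < A.valuation (y n)} (y 0)⁻¹ :=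
  T.le_of_mem H (fun _ hk => (T.etI H hk).2.2) (EtI.mem_loc (T.etI H le_rfl).2.1) hf

/-- All valuation rings in which `y_n` has a pole impose the same integrality condition. -/
lemma integral_at_pole {n : ℕ} {A A' : ValuationSubring E} (hA : 1 < A.valuation (y n))
    (hA' : 1 < A'.valuation (y n)) {f : E} (hf : f ∈ towerAlg F s y n)
    (h : A.valuation f ≤ 1) : A'.valuation f ≤ 1 := by
  have hsm : ∀ A : ValuationSubring E, 1 < A.valuation (y n) → A.valuation (y 0)⁻¹ < 1 := by
    intro A hA
    rw [map_inv₀]; exact inv_lt_one_of_one_lt₀ (T.val_big_le H (Nat.zero_le n) hA)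
  have := EtI.of_loc H (S := {A : ValuationSubring E | 1 < A.valuation (y n)}) hA (hsm A hA)
    (inv_ne_zero (T.y_ne H 0)) (T.mem_etI_loc H hf) h
  exact this.le_one hA' (hsm A' hA').le

end Tower

end TowerSec
end GS
set_option linter.unusedSectionVars false
namespace GS

/-! ### Approximation in the tower -/

section Surj

variable {F E : Type*} [Field F] [Fintype F] [Field E] [Algebra F E] {s : ℕ} {y : ℕ → E}

/-- `u` is a good approximation to `b`: it is small at all zeros of `u_n`, and close to `b` at
the poles of `y_n`. -/
def Approx (s : ℕ) (y : ℕ → E) (n : ℕ) (b u : E) : Prop :=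
  (∀ A : ValuationSubring E, A.valuation (uu s y n) < 1 → A.valuation u < 1) ∧
  (∀ A : ValuationSubring E, 1 < A.valuation (y n) →
    A.valuation (u - b) < A.valuation (y n) ^ s)

lemma Approx.add {n : ℕ} {b b' u u' : E} (h : Approx s y n b u) (h' : Approx s y n b' u') :
    Approx s y n (b + b') (u + u') := by
  refine ⟨fun A hA => val_add_lt (h.1 A hA) (h'.1 A hA), fun A hA => ?_⟩
  rw [add_sub_add_comm]
  exact Valuation.map_add_lt _ (h.2 A hA) (h'.2 A hA)

lemma Approx.const_mul {n : ℕ} {b u : E} (c : F) (h : Approx s y n b u) :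
    Approx s y n (algebraMap F E c * b) (algebraMap F E c * u) := by
  refine ⟨fun A hA => ?_, fun A hA => ?_⟩
  · rw [map_mul]
    exact (mul_le_of_le_one_left' (val_const_le _ c)).trans_lt (h.1 A hA)
  · rw [← mul_sub, map_mul]
    exact (mul_le_of_le_one_left' (val_const_le _ c)).trans_lt (h.2 A hA)

lemma Approx.zero_of {n : ℕ} {b : E}
    (h : ∀ A : ValuationSubring E, 1 < A.valuation (y n) →
      A.valuation b < A.valuation (y n) ^ s) : Approx s y n b 0 :=
  ⟨fun A _ => by simp, fun A hA => by rw [zero_sub, Valuation.map_neg]; exact h A hA⟩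

namespace Tower

variable (H : Setup F E s) (T : Tower s y)
include H T

lemma towerAlg_le_succ (n : ℕ) : towerAlg F s y n ≤ towerAlg F s y (n + 1) :=
  T.le_of_mem H (fun _ hk => y_mem (by omega)) (u_inv_mem (by omega))

/-- For `i < s` the approximation `0` is good enough; for larger `i` one recurses through
`y_0 ^ i = y_0 ^ (i-s) u_0 - y_0 ^ (i-s+1)`. -/
lemma approx_pow (i : ℕ) : ∃ u ∈ towerAlg F s y 0, Approx s y 0 (y 0 ^ i) u := by
  have hs := H.three_le
  induction i using Nat.strong_induction_on with
  | _ i ih =>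
    rcases Nat.lt_or_ge i s with hi | hi
    · refine ⟨0, zero_mem _, Approx.zero_of fun A hA => ?_⟩
      rw [map_pow]
      exact pow_lt_pow_right₀ hA hi
    · obtain ⟨u, hu, hu'⟩ := ih (i - s + 1) (by omega)
      have hm : y 0 ^ (i - s) * uu s y 0 ∈ towerAlg F s y 0 :=
        mul_mem (pow_mem (y_mem le_rfl) _) (u_mem le_rfl)
      refine ⟨y 0 ^ (i - s) * uu s y 0 + algebraMap F E (-1) * u,
        add_mem hm (mul_mem (Subalgebra.algebraMap_mem _ _) hu), ?_⟩
      have e : y 0 ^ i = y 0 ^ (i - s) * uu s y 0 + algebraMap F E (-1) * y 0 ^ (i - s + 1) := by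
        conv_lhs => rw [show i = (i - s) + s by omega]
        simp only [uu, map_neg, map_one]
        ring
      rw [e]
      refine Approx.add ⟨fun A hA => ?_, fun A hA => ?_⟩ (hu'.const_mul (-1))
      · exact val_mul_lt' (val_pow_le (H.le_of_as hA.le) _) hA
      · rw [sub_self, map_zero]
        exact pow_pos (zero_lt_one.trans hA) _

lemma approx_zero {b : E} (hb : b ∈ towerAlg F s y 0) :
    ∃ u ∈ towerAlg F s y 0, Approx s y 0 b u := by
  have hs := H.three_le
  by_cases hne : ∃ A : ValuationSubring E, 1 < A.valuation (y 0)
  swap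
  · push Not at hne
    exact ⟨0, zero_mem _, Approx.zero_of fun A hA => absurd hA (hne A).not_gt⟩
  obtain ⟨A₀, hA₀⟩ := hne
  have hy := T.y_ne H 0
  obtain ⟨N, hN⟩ := T.mem_etI_loc H hb
  have ht : ∀ A : ValuationSubring E, 1 < A.valuation (y 0) → A.valuation (y 0)⁻¹ < 1 :=
    fun A hA => by rw [map_inv₀]; exact inv_lt_one_of_one_lt₀ hA
  have key : ∀ (N : ℕ) (g : E),
      EtI F s {A : ValuationSubring E | 1 < A.valuation (y 0)} (y 0)⁻¹ g →
      ∃ u ∈ towerAlg F s y 0, Approx s y 0 (y 0 ^ N * g) u := by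
    intro N
    induction N with
    | zero =>
      intro g hg
      refine ⟨0, zero_mem _, Approx.zero_of fun A hA => ?_⟩
      rw [pow_zero, one_mul]
      exact (hg.le_one hA (ht A hA).le).trans_lt (one_lt_pow₀ hA H.ne_zero)
    | succ N ih =>
      intro g hg
      obtain ⟨c, h, hh, rfl⟩ := hg.exists_const H hA₀ (ht A₀ hA₀)
      obtain ⟨u, hu, hu'⟩ := ih h hh
      obtain ⟨w, hw, hw'⟩ := T.approx_pow H (N + 1)
      refine ⟨algebraMap F E c * w + u,
        add_mem (mul_mem (Subalgebra.algebraMap_mem _ _) hw) hu, ?_⟩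
      convert (hw'.const_mul c).add hu' using 1
      field_simp
      ring
  have := key N _ hN
  rwa [inv_pow, ← mul_assoc, mul_inv_cancel₀ (pow_ne_zero _ hy), one_mul] at this

omit H T in
/-- Approximation of `a` at the zeros of `u_n` and of `b` at the poles of `y_n` simultaneously. -/
lemma two_target {n : ℕ}
    (hS : ∀ b ∈ towerAlg F s y n, ∃ u ∈ towerAlg F s y n, Approx s y n b u) {a b : E}
    (ha : a ∈ towerAlg F s y n) (hb : b ∈ towerAlg F s y n) : ∃ e ∈ towerAlg F s y n,
    (∀ A : ValuationSubring E, A.valuation (uu s y n) < 1 → A.valuation (e - a) < 1) ∧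
    (∀ A : ValuationSubring E, 1 < A.valuation (y n) →
      A.valuation (e - b) < A.valuation (y n) ^ s) := by
  obtain ⟨u, hu, h1, h2⟩ := hS (b - a) (sub_mem hb ha)
  refine ⟨u + a, add_mem hu ha, fun A hA => ?_, fun A hA => ?_⟩
  · rw [add_sub_cancel_right]; exact h1 A hA
  · rw [show u + a - b = u - (b - a) by ring]; exact h2 A hA

/-- Simultaneous approximation of two polynomials, degree by degree from the top: the leading
coefficient is interpolated, and the error it causes at the zeros of `u_n` is pushed to lower
degrees by expanding around the approximate root `Y`. -/
lemma triangular {n : ℕ}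
    (hS : ∀ b ∈ towerAlg F s y n, ∃ u ∈ towerAlg F s y n, Approx s y n b u) (d : ℕ) (hd : d ≤ s)
    (P P' : Polynomial (towerAlg F s y n)) (hP : P ∈ Polynomial.degreeLT _ d)
    (hP' : P' ∈ Polynomial.degreeLT _ d) :
    ∃ G ∈ Polynomial.degreeLT (towerAlg F s y n) d,
      (∀ A : ValuationSubring E, A.valuation (uu s y n) < 1 →
        A.valuation (Polynomial.aeval (y (n + 1))⁻¹ (G - P')) < 1) ∧
      (∀ A : ValuationSubring E, 1 < A.valuation (y n) →
        A.valuation (Polynomial.aeval (y (n + 1))⁻¹ (G - P)) < A.valuation (y n) ^ s) := by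
  obtain ⟨Y, hY, hsh⟩ := exists_shift H (T.chain H n) (Nat.succ_pos n)
  have hz : ∀ A : ValuationSubring E, 1 < A.valuation (y n) →
      A.valuation (y (n + 1))⁻¹ ≤ 1 := by
    intro A hA
    apply H.le_of_as
    rw [T.rel n, map_inv₀]
    apply inv_le_one_of_one_le₀
    change 1 ≤ A.valuation (y n ^ s + y n)
    rw [H.as_gt hA]
    exact one_le_pow₀ hA.le
  induction d generalizing P P' with
  | zero =>
    have h0 : ∀ Q ∈ Polynomial.degreeLT (towerAlg F s y n) 0, Q = 0 := by
      intro Q hQ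
      rw [Polynomial.mem_degreeLT] at hQ
      by_contra h
      exact absurd hQ (not_lt.2 (Polynomial.zero_le_degree_iff.2 h))
    refine ⟨0, zero_mem _, fun A _ => ?_, fun A hA => ?_⟩
    · rw [h0 _ hP']; simp
    · rw [h0 _ hP, sub_self, map_zero, map_zero]
      exact pow_pos (zero_lt_one.trans hA) _
  | succ d ih =>
    obtain ⟨e, he, he1, he2⟩ := two_target hS (P'.coeff d).2 (P.coeff d).2
    obtain ⟨ε, hε⟩ : ∃ ε : towerAlg F s y n, ε = ⟨e, he⟩ - P'.coeff d := ⟨_, rfl⟩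
    set YY : towerAlg F s y n := ⟨Y, hY⟩ with hYY
    have hlow : ∀ Q ∈ Polynomial.degreeLT (towerAlg F s y n) (d + 1),
        Q - Polynomial.C (Q.coeff d) * Polynomial.X ^ d ∈
          Polynomial.degreeLT (towerAlg F s y n) d := by
      intro Q hQ
      rw [Polynomial.mem_degreeLT, Polynomial.degree_lt_iff_coeff_zero] at hQ ⊢
      intro m hm
      rw [Polynomial.coeff_sub, Polynomial.coeff_C_mul, Polynomial.coeff_X_pow]
      rcases Nat.eq_or_lt_of_le hm with rfl | h
      · simp
      · rw [hQ m h, if_neg (by omega)]; simp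
    have hbin : (Polynomial.X - Polynomial.C YY) ^ d - Polynomial.X ^ d ∈
        Polynomial.degreeLT (towerAlg F s y n) d := by
      have hm := (Polynomial.monic_X_sub_C YY).pow d
      have h1 : (Polynomial.X - Polynomial.C YY) ^ d ∈
          Polynomial.degreeLT (towerAlg F s y n) (d + 1) := by
        rw [Polynomial.mem_degreeLT]
        refine (Polynomial.degree_pow_le _ _).trans_lt ?_
        rw [Polynomial.degree_X_sub_C]
        simp only [nsmul_eq_mul, mul_one]
        exact_mod_cast Nat.lt_succ_self d
      have h2 := hlow _ h1
      have h3 : ((Polynomial.X - Polynomial.C YY) ^ d).coeff d = 1 := by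
        have := hm.coeff_natDegree
        rwa [Polynomial.natDegree_pow, Polynomial.natDegree_X_sub_C, mul_one] at this
      rwa [h3, map_one, one_mul] at h2
    obtain ⟨G, hG, hG1, hG2⟩ := ih (by omega) (P - Polynomial.C (P.coeff d) * Polynomial.X ^ d)
      (P' - Polynomial.C (P'.coeff d) * Polynomial.X ^ d +
        ε • ((Polynomial.X - Polynomial.C YY) ^ d - Polynomial.X ^ d))
      (hlow P hP) (add_mem (hlow P' hP') (Submodule.smul_mem _ _ hbin))
    refine ⟨G + Polynomial.C ⟨e, he⟩ * Polynomial.X ^ d, add_mem ?_ ?_, fun A hA => ?_,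
      fun A hA => ?_⟩
    · exact Polynomial.degreeLT_mono (Nat.le_succ d) hG
    · rw [Polynomial.mem_degreeLT]
      refine (Polynomial.degree_C_mul_X_pow_le _ _).trans_lt ?_
      exact_mod_cast Nat.lt_succ_self d
    · have e1 : G + Polynomial.C ⟨e, he⟩ * Polynomial.X ^ d - P' =
          (G - (P' - Polynomial.C (P'.coeff d) * Polynomial.X ^ d +
            ε • ((Polynomial.X - Polynomial.C YY) ^ d - Polynomial.X ^ d))) +
          Polynomial.C ε * (Polynomial.X - Polynomial.C YY) ^ d := by
        rw [hε, Polynomial.smul_eq_C_mul, map_sub]; ring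
      rw [e1, map_add]
      refine val_add_lt (hG1 A hA) ?_
      rw [map_mul, map_pow, map_sub, Polynomial.aeval_X, Polynomial.aeval_C, Polynomial.aeval_C]
      have hε' : A.valuation (ε : E) < 1 := by rw [hε]; exact he1 A hA
      exact hsh A (by simpa [uu] using hA) _ (by simpa [uu] using T.rel n) _ ε.2 hε' d
        (by omega)
    · have e1 : G + Polynomial.C ⟨e, he⟩ * Polynomial.X ^ d - P =
          (G - (P - Polynomial.C (P.coeff d) * Polynomial.X ^ d)) +
          Polynomial.C (⟨e, he⟩ - P.coeff d) * Polynomial.X ^ d := by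
        rw [map_sub]; ring
      rw [e1, map_add]
      refine Valuation.map_add_lt _ (hG2 A hA) ?_
      rw [map_mul, map_pow, Polynomial.aeval_X, Polynomial.aeval_C, map_mul]
      exact (mul_le_of_le_one_right' (val_pow_le (hz A hA) d)).trans_lt (he2 A hA)

/-- Let `z = 1 / y_{n+1}` and `π = y_{n+1} ^ (s-1) + 1`, so that `u_{n+1} = y_{n+1} π`. The element
`b' = b z ^ (s-1) (1 + z ^ (s-1)) ^ (Q-1)` satisfies `b' π = (1 + z ^ (s-1)) ^ Q b`. For a large
power `Q` of `s` this is close to `b` at the poles of `y_{n+1}`, and small at those zeros of `u_{n+1}`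
where `y_{n+1}` is a unit. By `triangular`, `b'` has an approximation that is also small at the
zeros of `u_n`, which include those of `y_{n+1}`; its product with `π` approximates `b`. -/
lemma approx_succ {n : ℕ}
    (hS : ∀ b ∈ towerAlg F s y n, ∃ u ∈ towerAlg F s y n, Approx s y n b u) {b : E}
    (hb : b ∈ towerAlg F s y (n + 1)) :
    ∃ u ∈ towerAlg F s y (n + 1), Approx s y (n + 1) b u := by
  have hs := H.three_le
  have hy := T.y_ne H (n + 1)
  obtain ⟨z, hz⟩ : ∃ z, z = (y (n + 1))⁻¹ := ⟨_, rfl⟩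
  have hzy : z * y (n + 1) = 1 := by rw [hz, inv_mul_cancel₀ hy]
  have hzm : z ∈ towerAlg F s y (n + 1) := hz ▸ y_inv_mem le_rfl
  obtain ⟨π, hπ⟩ : ∃ π, π = y (n + 1) ^ (s - 1) + 1 := ⟨_, rfl⟩
  have hπm : π ∈ towerAlg F s y (n + 1) :=
    hπ ▸ add_mem (pow_mem (y_mem le_rfl) _) (one_mem _)
  have hzπ : z ^ (s - 1) * π = 1 + z ^ (s - 1) := by
    rw [hπ, mul_add, ← mul_pow, hzy, one_pow, mul_one]
  have huπ : uu s y (n + 1) = y (n + 1) * π := by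
    rw [hπ, add_comm (_ ^ _)]; exact H.as_fact _
  -- where `y_{n+1}` is a unit, `1 + z ^ (s - 1)` has the same size as `u_{n+1}`
  have hunit : ∀ A : ValuationSubring E, A.valuation (y (n + 1)) = 1 →
      A.valuation π = A.valuation (uu s y (n + 1)) ∧
      A.valuation (1 + z ^ (s - 1)) = A.valuation (uu s y (n + 1)) := by
    intro A h1
    have h2 : A.valuation z = 1 := by rw [hz, map_inv₀, h1, inv_one]
    rw [← hzπ, huπ]
    simp [h1, h2]
  obtain ⟨N₁, hN₁⟩ := T.bound H
    (S := {A | A.valuation (y (n + 1)) = 1 ∧ A.valuation (1 + z ^ (s - 1)) < 1})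
    (ϖ := 1 + z ^ (s - 1)) (fun A hA => hA.2.le) (n := n + 1) (M := 1)
    (fun A hA => by rw [pow_one, map_mul, hA.1, mul_one]; exact hA.2.le)
    (fun A hA => by
      rw [pow_one, map_mul, (hunit A hA.1).2, map_inv₀, mul_inv_cancel₀]
      exact (Valuation.ne_zero_iff _).2 (T.u_ne H _)) hb
  have hpole : ∀ A : ValuationSubring E, 1 < A.valuation (y (n + 1)) → A.valuation z < 1 :=
    fun A hA => by rw [hz, map_inv₀]; exact inv_lt_one_of_one_lt₀ hA
  obtain ⟨N₂, hN₂⟩ := T.bound H (S := {A | 1 < A.valuation (y (n + 1))})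
    (ϖ := z) (fun A hA => (hpole A hA).le) (n := n + 1) (M := 1)
    (fun A hA => by rw [pow_one, hzy, map_one])
    (fun A hA => by
      rw [pow_one]
      refine val_mul_le (hpole A hA).le ?_
      rw [map_inv₀]
      apply inv_le_one_of_one_le₀
      change 1 ≤ A.valuation (y (n + 1) ^ s + y (n + 1))
      rw [H.as_gt hA]
      exact one_le_pow₀ (le_of_lt hA)) hb
  obtain ⟨Q, K, hQK, hQ1, hQ2⟩ : ∃ Q K : ℕ, Q = s ^ K ∧ N₁ + 1 ≤ Q ∧ N₂ ≤ (s - 1) * Q := by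
    refine ⟨s ^ (N₁ + N₂ + 1), N₁ + N₂ + 1, rfl, ?_, ?_⟩
    · have := Nat.lt_pow_self (n := N₁ + N₂ + 1) (show 1 < s by omega)
      omega
    · have h1 := Nat.lt_pow_self (n := N₁ + N₂ + 1) (show 1 < s by omega)
      have h2 := Nat.le_mul_of_pos_left (s ^ (N₁ + N₂ + 1)) (show 0 < s - 1 by omega)
      omega
  obtain ⟨b', hb'⟩ : ∃ b', b' = b * z ^ (s - 1) * (1 + z ^ (s - 1)) ^ (Q - 1) := ⟨_, rfl⟩
  have hb'm : b' ∈ towerAlg F s y (n + 1) := by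
    rw [hb']
    exact mul_mem (mul_mem hb (pow_mem hzm _))
      (pow_mem (add_mem (one_mem _) (pow_mem hzm _)) _)
  have hb'π : b' * π = (1 + z ^ (s - 1)) ^ Q * b := by
    have : (1 + z ^ (s - 1)) ^ Q = (1 + z ^ (s - 1)) ^ (Q - 1) * (z ^ (s - 1) * π) := by
      rw [hzπ, ← pow_succ, show Q - 1 + 1 = Q by omega]
    rw [this, hb']; ring
  obtain ⟨P, hP, hPb⟩ := T.exists_poly H hb'm
  obtain ⟨G, hG, hG1, hG2⟩ := T.triangular H hS s le_rfl P 0 hP (zero_mem _)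
  obtain ⟨h, hh⟩ : ∃ h, h = Polynomial.aeval (y (n + 1))⁻¹ G := ⟨_, rfl⟩
  have hhm : h ∈ towerAlg F s y (n + 1) := by
    rw [hh, Polynomial.aeval_eq_sum_range]
    refine sum_mem fun i _ => ?_
    rw [Algebra.smul_def]
    exact mul_mem (T.towerAlg_le_succ H n (G.coeff i).2) (pow_mem (y_inv_mem le_rfl) _)
  simp only [sub_zero, ← hh] at hG1
  simp only [map_sub, ← hh, hPb] at hG2
  refine ⟨h * π, mul_mem hhm hπm, fun A hA => ?_, fun A hA => ?_⟩
  · have hyA : A.valuation (y (n + 1)) ≤ 1 := H.le_of_as hA.le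
    rcases hyA.lt_or_eq with hlt | heq
    · refine val_mul_lt (hG1 A (T.val_small H hlt)) ?_
      rw [hπ]
      exact val_add_le (val_pow_le hyA _) (map_one _).le
    · obtain ⟨e1, e2⟩ := hunit A heq
      have hm : A.valuation (uu s y (n + 1)) * A.valuation (uu s y n) = 1 := by
        rw [← map_mul, T.mul_eq H, map_pow, heq, one_pow]
      have hun : 1 < A.valuation (uu s y n) := by
        by_contra hcon
        exact absurd hm (mul_lt_one_of_lt_of_le hA (not_lt.1 hcon)).ne
      have hyn : 1 < A.valuation (y n) := H.gt_of_as hun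
      have hyn' : A.valuation (y n) ^ s = A.valuation (uu s y n) := (H.as_gt hyn).symm
      have h1 : A.valuation ((h - b') * π) < 1 := by
        rw [map_mul, e1, ← hm, mul_comm]
        refine mul_lt_mul_of_pos_left ?_ ((Valuation.pos_iff _).2 (T.u_ne H _))
        rw [← hyn']; exact hG2 A hyn
      have h2 : A.valuation (b' * π) < 1 := by
        rw [hb'π, show Q = (Q - 1) + 1 by omega, pow_succ', mul_assoc]
        have hlt : A.valuation (1 + z ^ (s - 1)) < 1 := by rw [e2]; exact hA
        exact val_mul_lt hlt (hN₁ (Q - 1) (by omega) A ⟨heq, hlt⟩)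
      have := val_add_lt h1 h2
      rwa [← add_mul, sub_add_cancel] at this
  · obtain ⟨e1, e2, e3⟩ := T.val_big H hA
    have hπA : A.valuation π = A.valuation (y (n + 1)) ^ (s - 1) := by
      rw [hπ, ← map_pow]
      apply Valuation.map_add_eq_of_lt_left
      rw [map_one, map_pow]
      exact one_lt_pow₀ hA (by omega)
    have h1 : A.valuation ((h - b') * π) < A.valuation (y (n + 1)) ^ s := by
      rw [map_mul, hπA]
      conv_rhs => rw [show s = (s - 1) + 1 by omega, pow_succ']
      refine mul_lt_mul_of_pos_right ?_ (pow_pos (zero_lt_one.trans hA) _)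
      rw [← e3]; exact hG2 A e2
    have h2 : b' * π - b = z ^ ((s - 1) * Q) * b := by
      rw [hb'π, hQK, H.add_pow_pow, one_pow, ← pow_mul]; ring
    have h3 : A.valuation (b' * π - b) < A.valuation (y (n + 1)) ^ s := by
      rw [h2]
      exact (hN₂ _ hQ2 A hA).trans_lt (one_lt_pow₀ hA H.ne_zero)
    have := val_add_lt h1 h3
    rwa [show (h - b') * π + (b' * π - b) = h * π - b by ring] at this

/-- Every element of the `n`-th algebra can be approximated at the poles of `y_n` by one that is
small at the zeros of `u_n`. This replaces the strong approximation theorem and the genus bound. -/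
theorem exists_approx (n : ℕ) : ∀ b ∈ towerAlg F s y n,
    ∃ u ∈ towerAlg F s y n, Approx s y n b u := by
  induction n with
  | zero => exact fun b hb => T.approx_zero H hb
  | succ n ih => exact fun b hb => T.approx_succ H ih hb

end Tower
end Surj
end GS
set_option linter.unusedSectionVars false
namespace GS

/-! ### The ring of functions with one pole -/

section PoleRing

variable {F E : Type*} [Field F] [Fintype F] [Field E] [Algebra F E] {s : ℕ} {y : ℕ → E}

variable (F) in
/-- The subring of the `n`-th algebra of elements regular outside the pole of `y_n`. -/
def poleRing (s : ℕ) (y : ℕ → E) (n : ℕ) : Subalgebra F E where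
  carrier := {f | f ∈ towerAlg F s y n ∧
    ∀ A : ValuationSubring E, A.valuation (y n) ≤ 1 → A.valuation f ≤ 1}
  mul_mem' := fun ⟨h1, h2⟩ ⟨h3, h4⟩ =>
    ⟨mul_mem h1 h3, fun A hA => val_mul_le (h2 A hA) (h4 A hA)⟩
  add_mem' := fun ⟨h1, h2⟩ ⟨h3, h4⟩ =>
    ⟨add_mem h1 h3, fun A hA => val_add_le (h2 A hA) (h4 A hA)⟩
  algebraMap_mem' c := ⟨Subalgebra.algebraMap_mem _ c, fun _ _ => val_const_le _ c⟩

/-- The function `u_n ^ (s - 1) - 1`, whose zeros are the rational places used for evaluation. -/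
def h0 (s : ℕ) (y : ℕ → E) (n : ℕ) : E := uu s y n ^ (s - 1) - 1

variable (F) in
/-- The elements `f` of `B` satisfying `f ^ q ≡ f` modulo `h`. -/
def frobAlg (H : Setup F E s) (B : Subalgebra F E) (h : E) : Subalgebra F E where
  carrier := {f | f ∈ B ∧ ∃ g ∈ B, f ^ (s ^ 2) - f = h * g}
  mul_mem' := by
    rintro a b ⟨ha, g, hg, e⟩ ⟨hb, g', hg', e'⟩
    refine ⟨mul_mem ha hb, a ^ (s ^ 2) * g' + b * g,
      add_mem (mul_mem (pow_mem ha _) hg') (mul_mem hb hg), ?_⟩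
    rw [mul_pow]
    linear_combination a ^ (s ^ 2) * e' + b * e
  add_mem' := by
    rintro a b ⟨ha, g, hg, e⟩ ⟨hb, g', hg', e'⟩
    refine ⟨add_mem ha hb, g + g', add_mem hg hg', ?_⟩
    rw [H.add_pow_pow]
    linear_combination e + e'
  algebraMap_mem' c := ⟨Subalgebra.algebraMap_mem _ c, 0, zero_mem _, by
    rw [← map_pow, H.const_pow]; ring⟩

lemma inv_mem_frobAlg {H : Setup F E s} {B : Subalgebra F E} {h f : E} (hf : f ∈ frobAlg F H B h)
    (hi : f⁻¹ ∈ B) : f⁻¹ ∈ frobAlg F H B h := by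
  obtain ⟨hB, g, hg, e⟩ := hf
  by_cases h0 : f = 0
  · rw [h0, inv_zero]; exact zero_mem _
  refine ⟨hi, -(g * f⁻¹ ^ (s ^ 2 + 1)), neg_mem (mul_mem hg (pow_mem hi _)), ?_⟩
  have e2 : f⁻¹ ^ (s ^ 2) * f ^ (s ^ 2) = 1 := by rw [← mul_pow, inv_mul_cancel₀ h0, one_pow]
  have e3 : f⁻¹ * f = 1 := inv_mul_cancel₀ h0
  have : h * -(g * f⁻¹ ^ (s ^ 2 + 1)) = -(f ^ (s ^ 2) - f) * f⁻¹ ^ (s ^ 2 + 1) := by rw [e]; ring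
  rw [this, pow_succ]
  linear_combination (f⁻¹) * e2 - f⁻¹ ^ (s ^ 2) * e3

namespace Tower

variable (H : Setup F E s) (T : Tower s y)
include H T

/-- All `f` in the `n`-th algebra satisfy `f ^ q ≡ f` modulo `u_n ^ (s - 1) - 1`. It suffices to see
this for generators, starting from `y_k ^ q - y_k = (u_k ^ (s-1) - 1) u_k`. -/
lemma towerAlg_le_frobAlg (n : ℕ) :
    towerAlg F s y n ≤ frobAlg F H (towerAlg F s y n) (h0 s y n) := by
  have hs := H.three_le
  have hyu : ∀ k, y k ^ (s ^ 2) - y k = (uu s y k ^ (s - 1) - 1) * uu s y k := by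
    intro k
    have h1 : (uu s y k ^ (s - 1) - 1) * uu s y k = uu s y k ^ s - uu s y k := by
      rw [sub_mul, one_mul, ← pow_succ, show s - 1 + 1 = s by omega]
    rw [h1]
    simp only [uu]
    rw [H.add_pow, ← pow_mul, ← pow_two]; ring
  have key : ∀ j, j ≤ n → ∃ g ∈ towerAlg F s y n,
      uu s y (n - j) ^ (s - 1) - 1 = h0 s y n * g := by
    intro j hj
    induction j with
    | zero => exact ⟨1, one_mem _, by simp [h0]⟩
    | succ j ih =>
      obtain ⟨g, hg, e⟩ := ih (by omega)
      obtain ⟨k, hk⟩ : ∃ k, k = n - (j + 1) := ⟨_, rfl⟩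
      rw [← hk]
      rw [show n - j = k + 1 by omega] at e
      have hu := T.u_ne H (k + 1)
      have hy := T.y_ne H (k + 1)
      have e1 : uu s y k = y (k + 1) ^ (s + 1) * (uu s y (k + 1))⁻¹ := by
        rw [← T.mul_eq H k, mul_comm, inv_mul_cancel_left₀ hu]
      have e2 : y (k + 1) ^ (s ^ 2 - 1) = 1 + h0 s y n * g * (uu s y (k + 1) * (y (k + 1))⁻¹) := by
        have h1 := hyu (k + 1)
        rw [e] at h1
        have h2 : y (k + 1) ^ (s ^ 2) = y (k + 1) ^ (s ^ 2 - 1) * y (k + 1) := by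
          rw [← pow_succ, Nat.sub_add_cancel (Nat.one_le_pow _ _ (by omega))]
        rw [h2] at h1
        field_simp
        linear_combination h1
      have e3 : uu s y k ^ (s - 1) = y (k + 1) ^ (s ^ 2 - 1) * ((uu s y (k + 1))⁻¹) ^ (s - 1) := by
        rw [e1, mul_pow, ← pow_mul]
        congr 2
        obtain ⟨r, rfl⟩ : ∃ r, s = r + 1 := ⟨s - 1, by omega⟩
        simp only [Nat.add_sub_cancel]
        rw [show (r + 1) ^ 2 = (r + 1 + 1) * r + 1 by ring, Nat.add_sub_cancel]
      have e4 : uu s y (k + 1) ^ (s - 1) * ((uu s y (k + 1))⁻¹) ^ (s - 1) = 1 := by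
        rw [← mul_pow, mul_inv_cancel₀ hu, one_pow]
      refine ⟨g * (uu s y (k + 1) * (y (k + 1))⁻¹) * ((uu s y (k + 1))⁻¹) ^ (s - 1) -
        g * ((uu s y (k + 1))⁻¹) ^ (s - 1), ?_, ?_⟩
      · have hi : ((uu s y (k + 1))⁻¹) ∈ towerAlg F s y n := u_inv_mem (by omega)
        exact sub_mem (mul_mem (mul_mem hg (mul_mem (u_mem (by omega)) (y_inv_mem (by omega))))
          (pow_mem hi _)) (mul_mem hg (pow_mem hi _))
      · rw [e3, e2]
        linear_combination -((uu s y (k + 1))⁻¹) ^ (s - 1) * e + e4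
  have hyk : ∀ k ≤ n, y k ∈ frobAlg F H (towerAlg F s y n) (h0 s y n) := by
    intro k hk
    obtain ⟨g, hg, e⟩ := key (n - k) (by omega)
    rw [Nat.sub_sub_self hk] at e
    refine ⟨y_mem hk, g * uu s y k, mul_mem hg (u_mem hk), ?_⟩
    rw [hyu, e]; ring
  exact T.le_of_mem H hyk (inv_mem_frobAlg (add_mem (pow_mem (hyk n le_rfl) _) (hyk n le_rfl))
    (u_inv_mem le_rfl))

lemma mem_poleRing_of {n : ℕ} {f : E} (hf : f ∈ towerAlg F s y n)
    (h : ∀ A : ValuationSubring E, A.valuation (uu s y n) < 1 → A.valuation f ≤ 1) :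
    f ∈ poleRing F s y n := by
  refine ⟨hf, fun A hA => ?_⟩
  rcases lt_or_ge (A.valuation (uu s y n)) 1 with h1 | h1
  · exact h A h1
  · exact T.integral H hA h1 hf

lemma h0_mem (n : ℕ) : h0 s y n ∈ poleRing F s y n :=
  T.mem_poleRing_of H (sub_mem (pow_mem (u_mem le_rfl) _) (one_mem _)) fun _ hA =>
    val_sub_le (val_pow_le hA.le _) (map_one _).le

lemma poleRing_frob {n : ℕ} {f : E} (hf : f ∈ poleRing F s y n) :
    ∃ g ∈ poleRing F s y n, f ^ (s ^ 2) - f = h0 s y n * g := by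
  have hs := H.three_le
  obtain ⟨-, g, hg, e⟩ := T.towerAlg_le_frobAlg H n hf.1
  refine ⟨g, T.mem_poleRing_of H hg fun A hA => ?_, e⟩
  have h1 : A.valuation (h0 s y n) = 1 := by
    have : h0 s y n = -(1 + -(uu s y n ^ (s - 1))) := by rw [h0]; ring
    rw [this, Valuation.map_neg]
    apply val_one_add
    rw [Valuation.map_neg]
    exact val_pow_lt hA (by omega)
  have h2 := hf.2 A (H.le_of_as hA.le)
  have h3 := congrArg A.valuation e
  rw [map_mul, h1, one_mul] at h3
  rw [← h3]
  exact val_sub_le (val_pow_le h2 _) h2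

lemma poleRing_approx {n : ℕ} {b : E} (hb : b ∈ towerAlg F s y n) :
    ∃ f ∈ poleRing F s y n, ∀ A : ValuationSubring E, 1 < A.valuation (y n) →
      A.valuation (f - b) < A.valuation (y n) ^ s := by
  obtain ⟨u, hu, h1, h2⟩ := T.exists_approx H n b hb
  exact ⟨u, T.mem_poleRing_of H hu fun A hA => (h1 A hA).le, h2⟩

/-- An element `f` of the pole ring with a zero at the pole is zero: it is integral at every
valuation ring, hence algebraic over `F`; if it were nonzero, then `f⁻¹` would be integral over `F`
too, and could not have a pole. -/
lemma poleRing_eq_zero {n : ℕ} {A : ValuationSubring E} (hA : 1 < A.valuation (y n)) {f : E}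
    (hf : f ∈ poleRing F s y n) (hlt : A.valuation f < 1) : f = 0 := by
  by_contra hf0
  have hall : ∀ A' : ValuationSubring E, A'.valuation f ≤ 1 := by
    intro A'
    rcases le_or_gt (A'.valuation (y n)) 1 with h | h
    · exact hf.2 A' h
    · exact T.integral_at_pole H hA h hf.1 hlt.le
  have hint : IsIntegral (Subring.closure ((⊥ : Subalgebra F E).toSubring : Set E)) f := by
    have : f ∈ (integralClosure
        (Subring.closure ((⊥ : Subalgebra F E).toSubring : Set E)) E).toSubring := by
      rw [← iInf_valuationSubring_superset]
      simp only [Subring.mem_iInf]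
      intro V
      exact (V.1.valuation_le_one_iff f).1 (hall V.1)
    exact this
  rw [Subring.closure_eq] at hint
  have hint2 : IsIntegral (⊥ : Subalgebra F E) f := hint
  have hint' : IsIntegral F f := isIntegral_trans _ hint2
  have hinv : IsIntegral F f⁻¹ := hint'.isAlgebraic.inv.isIntegral
  have : A.valuation f⁻¹ ≤ 1 := by
    obtain ⟨p, hp, hpe⟩ := hinv
    have hφ : ∀ c, algebraMap F E c ∈ A := fun c =>
      (A.valuation_le_one_iff _).1 (val_const_le _ c)
    have hA : IsIntegral A f⁻¹ := by
      refine ⟨p.map ((algebraMap F E).codRestrict A hφ), hp.map _, ?_⟩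
      rw [Polynomial.eval₂_map]
      exact hpe
    obtain ⟨a, ha⟩ := IsIntegrallyClosed.algebraMap_eq_of_integral hA
    rw [← ha]
    exact (A.valuation_le_one_iff _).2 a.2
  rw [map_inv₀] at this
  have h3 := (one_lt_inv₀ ((Valuation.pos_iff _).2 hf0)).2 hlt
  exact absurd this h3.not_ge

end Tower
end PoleRing
end GS
set_option linter.unusedSectionVars false
namespace GS

/-! ### The tower in Laurent series -/

section Laurent

variable {F : Type*} [Field F] [Fintype F] {s : ℕ}

/-- Formal power series inside Laurent series, as a valuation ring. -/
noncomputable def Ainf (F : Type*) [Field F] : ValuationSubring (LaurentSeries F) where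
  carrier := {f | 0 ≤ f.orderTop}
  mul_mem' {a b} (ha hb) := by
    change 0 ≤ HahnSeries.addVal ℤ F (a * b)
    rw [AddValuation.map_mul]
    exact add_nonneg ha hb
  one_mem' := by simp
  add_mem' {a b} (ha hb) := by
    change 0 ≤ (a + b).orderTop
    exact (le_min ha hb).trans HahnSeries.min_orderTop_le_orderTop_add
  zero_mem' := by simp
  neg_mem' {a} (ha) := by simpa using ha
  mem_or_inv_mem' a := by
    by_cases h : a = 0
    · left; simp [h]
    have h1 : a.order + a⁻¹.order = 0 := by
      rw [← HahnSeries.order_mul h (inv_ne_zero h), mul_inv_cancel₀ h, HahnSeries.order_one]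
    simp only [Set.mem_ofPred_eq]
    rw [← HahnSeries.order_eq_orderTop_of_ne_zero h,
      ← HahnSeries.order_eq_orderTop_of_ne_zero (inv_ne_zero h)]
    norm_cast
    omega

lemma order_inv' {f : LaurentSeries F} (hf : f ≠ 0) : f⁻¹.order = -f.order := by
  have h1 : f.order + f⁻¹.order = 0 := by
    rw [← HahnSeries.order_mul hf (inv_ne_zero hf), mul_inv_cancel₀ hf, HahnSeries.order_one]
  omega

lemma Ainf_le_iff {f g : LaurentSeries F} (hf : f ≠ 0) (hg : g ≠ 0) :
    (Ainf F).valuation f ≤ (Ainf F).valuation g ↔ g.order ≤ f.order := by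
  have h1 : (Ainf F).valuation f ≤ (Ainf F).valuation g ↔ (Ainf F).valuation (f * g⁻¹) ≤ 1 := by
    rw [map_mul, map_inv₀, ← div_eq_mul_inv,
      div_le_one₀ ((Valuation.pos_iff _).2 hg)]
  have h2 : f * g⁻¹ ∈ Ainf F ↔ 0 ≤ (f * g⁻¹).orderTop :=
    ⟨fun h => h, fun h => h⟩
  rw [h1, ValuationSubring.valuation_le_one_iff, h2,
    ← HahnSeries.order_eq_orderTop_of_ne_zero (mul_ne_zero hf (inv_ne_zero hg)),
    HahnSeries.order_mul hf (inv_ne_zero hg), order_inv' hg]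
  norm_cast
  omega

lemma Ainf_lt_iff {f g : LaurentSeries F} (hf : f ≠ 0) (hg : g ≠ 0) :
    (Ainf F).valuation f < (Ainf F).valuation g ↔ g.order < f.order := by
  rw [lt_iff_not_ge, Ainf_le_iff hg hf, not_le]

lemma Ainf_eq_iff {f g : LaurentSeries F} (hf : f ≠ 0) (hg : g ≠ 0) :
    (Ainf F).valuation f = (Ainf F).valuation g ↔ f.order = g.order := by
  rw [le_antisymm_iff, Ainf_le_iff hf hg, Ainf_le_iff hg hf, ← le_antisymm_iff, eq_comm]

lemma Ainf_lt_one_iff {f : LaurentSeries F} (hf : f ≠ 0) :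
    (Ainf F).valuation f < 1 ↔ 0 < f.order := by
  rw [← map_one (Ainf F).valuation, Ainf_lt_iff hf one_ne_zero, HahnSeries.order_one]

lemma one_lt_Ainf_iff {f : LaurentSeries F} (hf : f ≠ 0) :
    1 < (Ainf F).valuation f ↔ f.order < 0 := by
  rw [← map_one (Ainf F).valuation, Ainf_lt_iff one_ne_zero hf, HahnSeries.order_one]

/-- The equation `z ^ s + z = g` is solved by `∑ (-1) ^ i g ^ (s ^ i)`. -/
lemma exists_as_root {R : Type*} [CommRing R] (hs : 2 ≤ s)
    (hadd : ∀ a b : PowerSeries R, (a + b) ^ s = a ^ s + b ^ s) (g : PowerSeries R)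
    (hg : PowerSeries.X ∣ g) : ∃ z : PowerSeries R, PowerSeries.X ∣ z ∧ z ^ s + z = g := by
  have hneg : ∀ a : PowerSeries R, (-a) ^ s = -a ^ s := by
    intro a
    have h := hadd (-a) a
    rw [neg_add_cancel, zero_pow (by omega)] at h
    linear_combination -h
  let S : ℕ → PowerSeries R := fun K => ∑ i ∈ Finset.range K, (-1) ^ i * g ^ s ^ i
  have hX : ∀ i, (PowerSeries.X : PowerSeries R) ^ (i + 1) ∣ g ^ s ^ i := by
    intro i
    exact (pow_dvd_pow_of_dvd hg _ |>.trans (pow_dvd_pow _ (Nat.lt_pow_self hs)))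
  have hS : ∀ K, S K ^ s + S K = g - (-1) ^ K * g ^ s ^ K := by
    intro K
    induction K with
    | zero => simp [S, zero_pow (show s ≠ 0 by omega)]
    | succ K ih =>
      have e : S (K + 1) = S K + (-1) ^ K * g ^ s ^ K := Finset.sum_range_succ _ _
      have e2 : ((-1) ^ K * g ^ s ^ K) ^ s = (-1) ^ K * g ^ s ^ (K + 1) := by
        rcases Nat.even_or_odd K with h | h
        · rw [h.neg_one_pow, one_mul, one_mul, ← pow_mul, pow_succ]
        · rw [h.neg_one_pow, neg_one_mul, neg_one_mul, hneg, ← pow_mul, pow_succ]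
      rw [e, hadd, e2, pow_succ (-1 : PowerSeries R) K]
      linear_combination ih
  let z : PowerSeries R := PowerSeries.mk fun m => PowerSeries.coeff m (S (m + 1))
  have hz : ∀ K, (PowerSeries.X : PowerSeries R) ^ K ∣ z - S K := by
    intro K
    rw [PowerSeries.X_pow_dvd_iff]
    intro m hm
    have hmono : ∀ d, PowerSeries.coeff m (S (m + 1 + d)) = PowerSeries.coeff m (S (m + 1)) := by
      intro d
      induction d with
      | zero => rfl
      | succ d ih =>
        have e : S (m + 1 + (d + 1)) = S (m + 1 + d) + (-1) ^ (m + 1 + d) * g ^ s ^ (m + 1 + d) :=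
          Finset.sum_range_succ _ _
        rw [e, map_add, ih, add_eq_left]
        exact PowerSeries.X_pow_dvd_iff.1 ((hX (m + 1 + d)).mul_left _) m (by omega)
    obtain ⟨d, rfl⟩ := Nat.exists_eq_add_of_le hm
    rw [map_sub, PowerSeries.coeff_mk, show m.succ + d = m + 1 + d from rfl, hmono, sub_self]
  refine ⟨z, ?_, ?_⟩
  · have h1 := hz 1
    rw [pow_one] at h1
    have h2 : S 1 = g := by simp [S]
    rw [h2] at h1
    exact by simpa using dvd_add h1 hg
  · rw [← sub_eq_zero]
    ext m
    rw [map_zero]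
    have h1 : (PowerSeries.X : PowerSeries R) ^ (m + 1) ∣ z ^ s + z - g := by
      have e : z ^ s + z - g = (z - S (m + 1)) ^ s + (z - S (m + 1)) -
          (-1) ^ (m + 1) * g ^ s ^ (m + 1) := by
        have e1 : z ^ s = (z - S (m + 1)) ^ s + S (m + 1) ^ s := by rw [← hadd, sub_add_cancel]
        rw [e1]
        linear_combination hS (m + 1)
      rw [e]
      refine dvd_sub (dvd_add ?_ (hz _)) (((pow_dvd_pow _ (Nat.le_succ _)).trans (hX _)).mul_left _)
      exact dvd_pow (hz _) (by omega)
    exact PowerSeries.X_pow_dvd_iff.1 h1 m (by omega)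

/-- The next tower element over one with a pole: `1 / (w ^ s + w)` is a power series without constant
term, so `exists_as_root` applies. -/
lemma exists_next (H : Setup F (LaurentSeries F) s)
    (hadd : ∀ a b : PowerSeries F, (a + b) ^ s = a ^ s + b ^ s)
    {w : LaurentSeries F} (hw : w.order < 0) :
    ∃ x : LaurentSeries F, x⁻¹ ^ s + x⁻¹ = (w ^ s + w)⁻¹ ∧ x.order = s * w.order := by
  have hs := H.three_le
  have hw0 : w ≠ 0 := by rintro rfl; simp at hw
  have hv := (one_lt_Ainf_iff hw0).2 hw
  have hv2 := H.as_gt hv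
  have hu0 : w ^ s + w ≠ 0 := by
    intro h
    rw [h, map_zero] at hv2
    exact (pow_pos (zero_lt_one.trans hv) s).ne hv2
  have hord : (w ^ s + w).order = s * w.order := by
    rw [← map_pow, Ainf_eq_iff hu0 (pow_ne_zero _ hw0)] at hv2
    rw [hv2, HahnSeries.order_pow, nsmul_eq_mul]
  have hio : (w ^ s + w)⁻¹.order = -(s * w.order) := by rw [order_inv' hu0, hord]
  have hpos : 0 < (w ^ s + w)⁻¹.order := by
    rw [hio]; nlinarith
  let g : PowerSeries F := PowerSeries.mk fun n => (w ^ s + w)⁻¹.coeff n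
  have hg : (HahnSeries.ofPowerSeries ℤ F g) = (w ^ s + w)⁻¹ := by
    ext i
    rw [PowerSeries.coeff_coe]
    split_ifs with hi
    · rw [HahnSeries.coeff_eq_zero_of_lt_order (by omega)]
    · rw [PowerSeries.coeff_mk, Int.natAbs_of_nonneg (by omega)]
  have hgX : PowerSeries.X ∣ g := by
    rw [PowerSeries.X_dvd_iff, ← PowerSeries.coeff_zero_eq_constantCoeff_apply,
      PowerSeries.coeff_mk, HahnSeries.coeff_eq_zero_of_lt_order (by simpa using hpos)]
  obtain ⟨z, hzX, hz⟩ := exists_as_root (by omega) hadd g hgX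
  obtain ⟨Z, hZ⟩ : ∃ Z : LaurentSeries F, Z = HahnSeries.ofPowerSeries ℤ F z := ⟨_, rfl⟩
  have hZe : Z ^ s + Z = (w ^ s + w)⁻¹ := by rw [← hg, ← hz, hZ, map_add, map_pow]
  have hZ0 : Z ≠ 0 := by
    rintro h
    rw [h, H.zero_pow, add_zero] at hZe
    exact inv_ne_zero hu0 hZe.symm
  have hZpos : 0 < Z.order := by
    by_contra hcon
    have h1 : Z.coeff Z.order ≠ 0 := by
      rwa [← HahnSeries.leadingCoeff_eq, HahnSeries.leadingCoeff_ne_zero]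
    apply h1
    conv_lhs => rw [hZ]
    rw [PowerSeries.coeff_coe]
    split_ifs with h2
    · rfl
    · rw [← hZ] at h2 ⊢
      rw [show Z.order = 0 by omega]
      simpa using PowerSeries.X_dvd_iff.1 hzX
  have h3 := H.as_lt ((Ainf_lt_one_iff hZ0).2 hZpos)
  rw [hZe, Ainf_eq_iff (inv_ne_zero hu0) hZ0, hio] at h3
  refine ⟨Z⁻¹, by rw [inv_inv]; exact hZe, ?_⟩
  rw [order_inv' hZ0, ← h3, neg_neg]

/-- The tower inside Laurent series, starting with `y_0 = 1 / t`. -/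
lemma exists_tower (H : Setup F (LaurentSeries F) s)
    (hadd : ∀ a b : PowerSeries F, (a + b) ^ s = a ^ s + b ^ s) :
    ∃ y : ℕ → LaurentSeries F, Tower s y ∧ ∀ k, (y k).order = -(s : ℤ) ^ k := by
  have hs := H.three_le
  have hsp : ∀ k : ℕ, (0 : ℤ) < (s : ℤ) ^ k := fun k => pow_pos (by omega) k
  have key : ∀ w : {w : LaurentSeries F // w.order < 0}, ∃ x : {x : LaurentSeries F // x.order < 0},
      x.1⁻¹ ^ s + x.1⁻¹ = (w.1 ^ s + w.1)⁻¹ ∧ x.1.order = s * w.1.order := by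
    rintro ⟨w, hw⟩
    obtain ⟨x, h1, h2⟩ := exists_next H hadd hw
    exact ⟨⟨x, by rw [h2]; nlinarith⟩, h1, h2⟩
  choose nx hnx1 hnx2 using key
  have h0 : (HahnSeries.single (-1 : ℤ) (1 : F)).order < 0 := by
    rw [HahnSeries.order_single one_ne_zero]; norm_num
  let y : ℕ → {w : LaurentSeries F // w.order < 0} := fun k =>
    Nat.rec ⟨HahnSeries.single (-1 : ℤ) (1 : F), h0⟩ (fun _ w => nx w) k
  have hy : ∀ k, (y k).1.order = -(s : ℤ) ^ k := by
    intro k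
    induction k with
    | zero =>
      change (HahnSeries.single (-1 : ℤ) (1 : F)).order = _
      rw [HahnSeries.order_single one_ne_zero]; norm_num
    | succ k ih =>
      change (nx (y k)).1.order = _
      rw [hnx2, ih, pow_succ]; ring
  refine ⟨fun k => (y k).1, ⟨?_, fun k => hnx1 (y k)⟩, hy⟩
  intro h
  have hne : (y 0).1 ≠ 0 := by
    intro h'
    have := (y 0).2
    rw [h'] at this; simp at this
  have hv := (one_lt_Ainf_iff hne).2 (y 0).2
  have hv2 := H.as_gt hv
  change (y 0).1 ^ s + (y 0).1 = 0 at h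
  rw [h, map_zero] at hv2
  exact (pow_pos (zero_lt_one.trans hv) s).ne hv2

/-- The properties of the rings `poleRing F s y n` used for the codes. -/
theorem exists_ring (H : Setup F (LaurentSeries F) s)
    (hadd : ∀ a b : PowerSeries F, (a + b) ^ s = a ^ s + b ^ s) (n : ℕ) :
    ∃ (R : Subalgebra F (LaurentSeries F)), ∃ h ∈ R,
      h ≠ 0 ∧ h.order = -((s - 1) * (s : ℤ) ^ (n + 1)) ∧
      (∀ f ∈ R, 0 < f.order → f = 0) ∧
      (∀ j : ℕ, s ^ (n + 1) ≤ j → ∃ f ∈ R, f.order = -(j : ℤ)) ∧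
      (∀ f ∈ R, ∃ g ∈ R, f ^ Fintype.card F - f = h * g) := by
  have hs := H.three_le
  obtain ⟨y, T, hy⟩ := exists_tower H hadd
  have hsp : ∀ k : ℕ, (0 : ℤ) < (s : ℤ) ^ k := fun k => pow_pos (by omega) k
  have hv : ∀ k, 1 < (Ainf F).valuation (y k) := fun k => by
    rw [one_lt_Ainf_iff (T.y_ne H k), hy]; linarith [hsp k]
  have hu : (uu s y n).order = -(s : ℤ) ^ (n + 1) := by
    have h1 := H.as_gt (hv n)
    rw [← map_pow] at h1
    rw [(Ainf_eq_iff (T.u_ne H n) (pow_ne_zero _ (T.y_ne H n))).1 h1, HahnSeries.order_pow, hy,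
      nsmul_eq_mul, pow_succ]
    ring
  have hupow : (uu s y n ^ (s - 1)).order = -((s - 1) * (s : ℤ) ^ (n + 1)) := by
    rw [HahnSeries.order_pow, hu, nsmul_eq_mul, Nat.cast_sub (by omega)]; push_cast; ring
  have hup0 : uu s y n ^ (s - 1) ≠ 0 := pow_ne_zero _ (T.u_ne H n)
  have hneg : (uu s y n ^ (s - 1)).order < 0 := by
    rw [hupow]
    have : (0 : ℤ) < (s : ℤ) - 1 := by omega
    nlinarith [hsp (n + 1)]
  have hvh : (Ainf F).valuation (h0 s y n) = (Ainf F).valuation (uu s y n ^ (s - 1)) := by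
    rw [h0]
    apply val_eq_of_sub_lt
    rw [sub_sub_cancel_left, Valuation.map_neg, map_one]
    exact (one_lt_Ainf_iff hup0).2 hneg
  have hh0 : h0 s y n ≠ 0 := by
    intro h
    rw [h, map_zero] at hvh
    exact hup0 ((Valuation.zero_iff _).1 hvh.symm)
  refine ⟨poleRing F s y n, h0 s y n, T.h0_mem H n, hh0, ?_, ?_, ?_, ?_⟩
  · rw [(Ainf_eq_iff hh0 hup0).1 hvh, hupow]
  · intro f hf hpos
    have hf0 : f ≠ 0 := by rintro rfl; simp at hpos
    exact T.poleRing_eq_zero H (hv n) hf ((Ainf_lt_one_iff hf0).2 hpos)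
  · intro j hj
    obtain ⟨f, hf, hf2⟩ := T.poleRing_approx H (n := n) (pow_mem (y_mem (Nat.zero_le n)) j)
    refine ⟨f, hf, ?_⟩
    have h1 := hf2 _ (hv n)
    have hyj : y 0 ^ j ≠ 0 := pow_ne_zero _ (T.y_ne H 0)
    have hyjo : (y 0 ^ j).order = -(j : ℤ) := by
      rw [HahnSeries.order_pow, hy, pow_zero, nsmul_eq_mul]; ring
    have h2 : (Ainf F).valuation (f - y 0 ^ j) < (Ainf F).valuation (y 0 ^ j) := by
      refine h1.trans_le ?_
      rw [← map_pow, Ainf_le_iff (pow_ne_zero _ (T.y_ne H n)) hyj, hyjo, HahnSeries.order_pow, hy,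
        nsmul_eq_mul]
      have : ((s ^ (n + 1) : ℕ) : ℤ) ≤ j := by exact_mod_cast hj
      push_cast at this
      rw [pow_succ] at this
      linarith
    have h3 := val_eq_of_sub_lt h2
    have hf0 : f ≠ 0 := by
      rintro rfl
      rw [map_zero] at h3
      exact hyj ((Valuation.zero_iff _).1 h3.symm)
    rw [(Ainf_eq_iff hf0 hyj).1 h3, hyjo]
  · intro f hf
    rw [H.card]
    exact T.poleRing_frob H hf

end Laurent
end GS
set_option linter.unusedSectionVars false
namespace GS

/-! ### Rational points -/

section Points

variable {F R : Type*} [Field F] [Fintype F] [CommRing R] [Algebra F R]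

/-- In a domain, the roots of `X ^ q - X` are the elements of `F`. -/
lemma exists_const_of_pow_card {A : Type*} [CommRing A] [IsDomain A] [Algebra F A] {x : A}
    (hx : x ^ Fintype.card F = x) : ∃ c : F, algebraMap F A c = x := by
  have hcard : 1 < Fintype.card F := Fintype.one_lt_card
  have hmon : (Polynomial.X ^ Fintype.card F - Polynomial.X : Polynomial F).Monic :=
    Polynomial.monic_X_pow_sub (by rw [Polynomial.degree_X]; exact_mod_cast hcard)
  have h0 := Polynomial.prod_multiset_X_sub_C_of_monic_of_roots_card_eq hmon (by
    rw [FiniteField.roots_X_pow_card_sub_X, FiniteField.X_pow_card_sub_X_natDegree_eq _ hcard]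
    simp)
  rw [FiniteField.roots_X_pow_card_sub_X] at h0
  have h1 := congrArg (Polynomial.aeval x) h0
  rw [Finset.prod_map_val, map_prod] at h1
  simp only [map_sub, map_pow, Polynomial.aeval_X, Polynomial.aeval_C, hx, sub_self] at h1
  obtain ⟨c, -, hc⟩ := Finset.prod_eq_zero_iff.1 h1
  exact ⟨c, (sub_eq_zero.1 hc).symm⟩

/-- If `f ^ q ≡ f` modulo `h` for all `f`, then an element vanishing at all rational points of
`h = 0` is a multiple of `h`. -/
lemma dvd_of_vanish {h : R} (hF : ∀ f : R, h ∣ f ^ Fintype.card F - f) {f : R}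
    (hf : ∀ φ : R →ₐ[F] F, φ h = 0 → φ f = 0) : h ∣ f := by
  have hcard : 1 < Fintype.card F := Fintype.one_lt_card
  by_contra hnd
  have hrad : f ∉ (Ideal.span {h}).radical := by
    rintro ⟨k, hk⟩
    rw [Ideal.mem_span_singleton] at hk
    have hpow : ∀ j, h ∣ f ^ Fintype.card F ^ j - f := by
      intro j
      induction j with
      | zero => simp
      | succ j ih =>
        have := dvd_add (hF (f ^ Fintype.card F ^ j)) ih
        rwa [← pow_mul, ← pow_succ, sub_add_sub_cancel] at this
    have h1 : h ∣ f ^ Fintype.card F ^ k :=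
      hk.trans (pow_dvd_pow _ (Nat.lt_pow_self hcard).le)
    exact hnd (by simpa using dvd_sub h1 (hpow k))
  rw [Ideal.radical_eq_sInf, Ideal.mem_sInf] at hrad
  push Not at hrad
  obtain ⟨J, ⟨hJ, hJp⟩, hfJ⟩ := hrad
  have hbij : Function.Bijective (algebraMap F (R ⧸ J)) := by
    refine ⟨(algebraMap F (R ⧸ J)).injective, fun x => ?_⟩
    obtain ⟨a, rfl⟩ := Ideal.Quotient.mk_surjective x
    apply exists_const_of_pow_card
    rw [← map_pow, Ideal.Quotient.eq]
    exact hJ (Ideal.mem_span_singleton.2 (hF a))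
  let e : F ≃ₐ[F] (R ⧸ J) := AlgEquiv.ofBijective (Algebra.ofId F (R ⧸ J)) hbij
  let φ : R →ₐ[F] F := e.symm.toAlgHom.comp (Ideal.Quotient.mkₐ F J)
  have hφ : ∀ a, φ a = 0 ↔ a ∈ J := by
    intro a
    change e.symm (Ideal.Quotient.mk J a) = 0 ↔ _
    rw [map_eq_zero_iff _ e.symm.injective, Ideal.Quotient.eq_zero_iff_mem]
  exact hfJ ((hφ f).1 (hf φ ((hφ h).2 (hJ (Ideal.mem_span_singleton_self h)))))

/-- Distinct rational points are separated by functions. -/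
lemma exists_delta {ι : Type*} [Fintype ι] [DecidableEq ι] {P : ι → (R →ₐ[F] F)}
    (hP : Function.Injective P) (i : ι) :
    ∃ e : R, P i e = 1 ∧ ∀ j, j ≠ i → P j e = 0 := by
  have key : ∀ j, j ≠ i → ∃ a : R, P i a = 1 ∧ P j a = 0 := by
    intro j hj
    have : ∃ a, P i a ≠ P j a := by
      by_contra hcon
      push Not at hcon
      exact hj (hP (AlgHom.ext hcon)).symm
    obtain ⟨a, ha⟩ := this
    refine ⟨algebraMap F R (P i a - P j a)⁻¹ * (a - algebraMap F R (P j a)), ?_, ?_⟩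
    · simp only [map_mul, map_sub, AlgHom.commutes, Algebra.algebraMap_self, RingHom.id_apply]
      exact inv_mul_cancel₀ (sub_ne_zero.2 ha)
    · simp
  choose! a ha1 ha2 using key
  refine ⟨∏ j ∈ Finset.univ.erase i, a j, ?_, fun j hj => ?_⟩
  · rw [map_prod]
    exact Finset.prod_eq_one fun j hj => ha1 j (Finset.ne_of_mem_erase hj)
  · rw [map_prod]
    exact Finset.prod_eq_zero (Finset.mem_erase.2 ⟨hj, Finset.mem_univ j⟩) (ha2 j hj)

end Points

/-! ### Functions ordered by their pole order -/

section Code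

variable {F R : Type*} [Field F] [Fintype F] [CommRing R] [IsDomain R] [Algebra F R]

/-- A ring `R` of functions with poles at one rational place only, presented through its Laurent
expansions `ι` there, with all pole orders `≥ c` occurring, and an element `h` of pole order `N`
such that `f ^ q ≡ f` modulo `h` for all `f`. -/
structure PoleData (ι : R →+* LaurentSeries F) (h : R) (N c : ℕ) : Prop where
  inj : Function.Injective ι
  const : ∀ a : F, ι (algebraMap F R a) = HahnSeries.C a
  pos : ∀ f : R, 0 < (ι f).order → f = 0
  h_ne : h ≠ 0
  h_order : (ι h).order = -(N : ℤ)
  exist : ∀ j : ℕ, c ≤ j → ∃ f : R, (ι f).order = -(j : ℤ)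
  frob : ∀ f : R, h ∣ f ^ Fintype.card F - f
  c_pos : 0 < c
  c_lt : c < N

namespace PoleData

variable {ι : R →+* LaurentSeries F} {h : R} {N c : ℕ} (D : PoleData ι h N c)
include D

lemma smul_coeff (a : F) (f : R) (m : ℤ) : (ι (a • f)).coeff m = a * (ι f).coeff m := by
  rw [Algebra.smul_def, map_mul, D.const, HahnSeries.C_mul_eq_smul]
  rfl

/-- The coefficient at `t ^ m`, as a functional on `R`. -/
noncomputable def coeffL (m : ℤ) : R →ₗ[F] F where
  toFun f := (ι f).coeff m
  map_add' _ _ := by rw [map_add]; rfl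
  map_smul' a f := D.smul_coeff a f m

lemma coeffL_apply (m : ℤ) (f : R) : D.coeffL m f = (ι f).coeff m := rfl

/-- The elements of `R` with a pole of order at most `L`. -/
noncomputable def RL (L : ℕ) : Submodule F R := ⨅ (m : ℤ) (_ : m < -(L : ℤ)), LinearMap.ker (D.coeffL m)

lemma mem_RL {L : ℕ} {f : R} : f ∈ D.RL L ↔ ∀ m : ℤ, m < -(L : ℤ) → (ι f).coeff m = 0 := by
  simp [RL, Submodule.mem_iInf, coeffL_apply]

lemma map_ne {f : R} (hf : f ≠ 0) : ι f ≠ 0 := (map_ne_zero_iff ι D.inj).2 hf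

lemma coeff_order_ne {f : R} (hf : f ≠ 0) : (ι f).coeff (ι f).order ≠ 0 := by
  rw [← HahnSeries.leadingCoeff_eq, HahnSeries.leadingCoeff_ne_zero]
  exact D.map_ne hf

lemma mem_RL_iff {L : ℕ} {f : R} (hf : f ≠ 0) : f ∈ D.RL L ↔ -(L : ℤ) ≤ (ι f).order := by
  rw [mem_RL]
  constructor
  · intro h
    by_contra hcon
    exact D.coeff_order_ne hf (h _ (by omega))
  · intro h m hm
    exact HahnSeries.coeff_eq_zero_of_lt_order (by omega)

lemma RL_mono {L L' : ℕ} (h : L ≤ L') : D.RL L ≤ D.RL L' := by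
  intro f hf
  rw [mem_RL] at hf ⊢
  exact fun m hm => hf m (by omega)

lemma exists_mem_RL (f : R) : ∃ L, f ∈ D.RL L := by
  by_cases hf : f = 0
  · exact ⟨0, hf ▸ zero_mem _⟩
  · exact ⟨(ι f).order.natAbs, (D.mem_RL_iff hf).2 (by omega)⟩

lemma order_mul {f g : R} (hf : f ≠ 0) (hg : g ≠ 0) :
    (ι (f * g)).order = (ι f).order + (ι g).order := by
  rw [map_mul, HahnSeries.order_mul (D.map_ne hf) (D.map_ne hg)]

lemma mem_RL_of_coeff {L : ℕ} {f : R} (hf : f ∈ D.RL (L + 1))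
    (h : D.coeffL (-((L : ℤ) + 1)) f = 0) : f ∈ D.RL L := by
  rw [mem_RL] at hf ⊢
  intro m hm
  rcases eq_or_ne m (-((L : ℤ) + 1)) with rfl | hne
  · exact h
  · exact hf m (by push_cast; omega)

lemma RL_finite (L : ℕ) : Module.Finite F (D.RL L) := by
  refine Module.Finite.of_injective ((LinearMap.pi fun i : Fin (L + 1) =>
    D.coeffL (-(i : ℤ))).comp (D.RL L).subtype) ?_
  rw [← LinearMap.ker_eq_bot, LinearMap.ker_eq_bot']
  rintro ⟨f, hf⟩ h
  by_contra hne
  have hf0 : f ≠ 0 := fun h' => hne (Subtype.ext h')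
  have h1 := (D.mem_RL_iff hf0).1 hf
  rcases lt_or_ge 0 (ι f).order with h3 | h3
  · exact hf0 (D.pos f h3)
  · have h5 := congrFun h ⟨(ι f).order.natAbs, by omega⟩
    apply D.coeff_order_ne hf0
    have h6 : (ι f).coeff (-((ι f).order.natAbs : ℤ)) = 0 := h5
    rwa [show -((ι f).order.natAbs : ℤ) = (ι f).order by omega] at h6

lemma finrank_succ {L : ℕ} (hL : c ≤ L + 1) :
    Module.finrank F (D.RL (L + 1)) = Module.finrank F (D.RL L) + 1 := by
  have := D.RL_finite (L + 1)
  let φ : D.RL (L + 1) →ₗ[F] F := (D.coeffL (-((L : ℤ) + 1))).comp (D.RL (L + 1)).subtype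
  have h1 := LinearMap.finrank_range_add_finrank_ker φ
  have h2 : (LinearMap.ker φ).map (D.RL (L + 1)).subtype = D.RL L := by
    ext f
    simp only [Submodule.mem_map, LinearMap.mem_ker, Submodule.subtype_apply, Subtype.exists]
    constructor
    · rintro ⟨g, hg, h0, rfl⟩
      exact D.mem_RL_of_coeff hg h0
    · intro hf
      exact ⟨f, D.RL_mono (Nat.le_succ L) hf, D.mem_RL.1 hf _ (by omega), rfl⟩
  have h3 : Module.finrank F (LinearMap.ker φ) = Module.finrank F (D.RL L) := by
    rw [← h2, Submodule.finrank_map_subtype_eq]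
  have h4 : LinearMap.range φ = ⊤ := by
    rw [LinearMap.range_eq_top]
    apply LinearMap.surjective
    intro h0
    obtain ⟨f, hf⟩ := D.exist (L + 1) hL
    have hf0 : f ≠ 0 := by rintro rfl; simp at hf; omega
    have hm : f ∈ D.RL (L + 1) := (D.mem_RL_iff hf0).2 hf.ge
    have h5 : (ι f).coeff (-((L : ℤ) + 1)) = 0 := LinearMap.congr_fun h0 ⟨f, hm⟩
    apply D.coeff_order_ne hf0
    rw [hf]; exact_mod_cast h5
  rw [h4, finrank_top, Module.finrank_self, h3] at h1
  omega

lemma finrank_add (d : ℕ) :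
    Module.finrank F (D.RL (c + d)) = Module.finrank F (D.RL c) + d := by
  induction d with
  | zero => rfl
  | succ d ih => rw [← add_assoc, D.finrank_succ (by omega), ih]; omega

/-- Modulo `h`, every element can be reduced to pole order at most `c + N`. -/
lemma exists_reduce (f : R) : ∃ g r : R, r ∈ D.RL (c + N) ∧ f = h * g + r := by
  obtain ⟨L, hL⟩ := D.exists_mem_RL f
  induction L generalizing f with
  | zero => exact ⟨0, f, D.RL_mono (Nat.zero_le _) hL, by ring⟩
  | succ L ih =>
    rcases Nat.lt_or_ge (c + N) (L + 1) with hlt | hle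
    swap
    · exact ⟨0, f, D.RL_mono hle hL, by ring⟩
    obtain ⟨g₀, hg₀⟩ := D.exist (L + 1 - N) (by omega)
    have hg0 : g₀ ≠ 0 := by rintro rfl; simp at hg₀; omega
    have hord : (ι (h * g₀)).order = -((L : ℤ) + 1) := by
      rw [D.order_mul D.h_ne hg0, D.h_order, hg₀]; omega
    have hne := D.coeff_order_ne (mul_ne_zero D.h_ne hg0)
    rw [hord] at hne
    have hmem : h * g₀ ∈ D.RL (L + 1) :=
      (D.mem_RL_iff (mul_ne_zero D.h_ne hg0)).2 (by rw [hord]; push_cast; omega)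
    obtain ⟨a, ha⟩ : ∃ a : F, a = (ι f).coeff (-((L : ℤ) + 1)) /
      (ι (h * g₀)).coeff (-((L : ℤ) + 1)) := ⟨_, rfl⟩
    obtain ⟨g, r, hr, e⟩ := ih (f - a • (h * g₀)) (by
      refine D.mem_RL_of_coeff (sub_mem hL (Submodule.smul_mem _ _ hmem)) ?_
      rw [map_sub, map_smul, coeffL_apply, coeffL_apply, ha, smul_eq_mul, div_mul_cancel₀ _ hne,
        sub_self])
    refine ⟨g + a • g₀, r, hr, ?_⟩
    rw [mul_add, mul_smul_comm]
    linear_combination e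

/-- At most `N` rational points lie on `h = 0`: evaluation maps `RL (c + N)` onto the space of functions
on these points, and its kernel contains `h * RL c`, which has codimension `N`. -/
lemma card_le {k : ℕ} {P : Fin k → (R →ₐ[F] F)} (hP : Function.Injective P)
    (hPh : ∀ i, P i h = 0) : k ≤ N := by
  have := D.RL_finite (c + N)
  have := D.RL_finite c
  let ψ : D.RL (c + N) →ₗ[F] (Fin k → F) :=
    (LinearMap.pi fun i => (P i).toLinearMap).comp (D.RL (c + N)).subtype
  have hψ : LinearMap.range ψ = ⊤ := by
    rw [LinearMap.range_eq_top]
    intro x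
    choose e he1 he2 using fun i => exists_delta hP i
    obtain ⟨g, r, hr, hgr⟩ := D.exists_reduce (∑ i, x i • e i)
    refine ⟨⟨r, hr⟩, ?_⟩
    ext j
    change P j r = x j
    have h1 := congrArg (P j) hgr
    rw [map_add, map_mul, hPh, zero_mul, zero_add, map_sum] at h1
    rw [← h1, Finset.sum_eq_single j]
    · rw [map_smul, he1, smul_eq_mul, mul_one]
    · intro i _ hi
      rw [map_smul, he2 i j hi.symm, smul_zero]
    · simp
  have h1 := LinearMap.finrank_range_add_finrank_ker ψ
  rw [hψ, finrank_top, Module.finrank_fin_fun, D.finrank_add] at h1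
  have hmem : ∀ f ∈ D.RL c, h * f ∈ D.RL (c + N) := by
    intro f hf
    by_cases hf0 : f = 0
    · rw [hf0, mul_zero]; exact zero_mem _
    rw [D.mem_RL_iff (mul_ne_zero D.h_ne hf0), D.order_mul D.h_ne hf0, D.h_order]
    have := (D.mem_RL_iff hf0).1 hf
    push_cast; omega
  let μ : D.RL c →ₗ[F] LinearMap.ker ψ :=
    { toFun := fun f => ⟨⟨h * f.1, hmem f.1 f.2⟩, by
        rw [LinearMap.mem_ker]
        ext j
        change P j (h * f.1) = 0
        rw [map_mul, hPh, zero_mul]⟩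
      map_add' := fun f g => by
        apply Subtype.ext; apply Subtype.ext
        exact mul_add h f.1 g.1
      map_smul' := fun a f => by
        apply Subtype.ext; apply Subtype.ext
        exact mul_smul_comm a h f.1 }
  have hμ : Function.Injective μ := by
    intro f g hfg
    apply Subtype.ext
    have : h * f.1 = h * g.1 := congrArg (fun x => x.1.1) hfg
    exact mul_left_cancel₀ D.h_ne this
  have h2 := LinearMap.finrank_le_finrank_of_injective hμ
  omega

end PoleData
end Code
end GS

namespace GS

/-! ### The intersecting code -/

namespace PoleData

variable {F R : Type*} [Field F] [Fintype F] [CommRing R] [IsDomain R] [Algebra F R]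
  {ι : R →+* LaurentSeries F} {h : R} {N c : ℕ} (D : PoleData ι h N c)
include D

lemma finite_points : Finite {φ : R →ₐ[F] F // φ h = 0} := by
  by_contra hcon
  have : Infinite {φ : R →ₐ[F] F // φ h = 0} := not_finite_iff_infinite.1 hcon
  let e := Infinite.natEmbedding {φ : R →ₐ[F] F // φ h = 0}
  have hle := D.card_le (k := N + 1) (P := fun i => (e i).1)
    (fun i j hij => Fin.ext (e.injective (Subtype.ext hij))) (fun i => (e i).2)
  omega

/-- An element of pole order less than `N` vanishing at all points of `h = 0` is zero. -/
lemma eq_zero_of_vanish {L : ℕ} (hL : L < N) {f : R} (hf : f ∈ D.RL L)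
    (hv : ∀ φ : R →ₐ[F] F, φ h = 0 → φ f = 0) : f = 0 := by
  obtain ⟨g, rfl⟩ := dvd_of_vanish D.frob hv
  by_contra hne
  have hg := right_ne_zero_of_mul hne
  have h1 := (D.mem_RL_iff hne).1 hf
  rw [D.order_mul D.h_ne hg, D.h_order] at h1
  exact hg (D.pos g (by omega))

/-- The evaluation code at the zeros of `h`, restricted to functions of pole order at most `M`
that vanish at a set of points on which the evaluations form a basis of the span of all
evaluations on `RL c`. A product `f f'` vanishing at all zeros is `h g` with `g ∈ RL c`, and `g`
vanishes at these points, since both factors do and the zeros of `h` are simple; hence `g` vanishes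
at all zeros, and `g = 0`. -/
lemma exists_code {M : ℕ} (hcM : c ≤ M) (hMN : M < N) (h2M : 2 * M ≤ N + c) :
    ∃ n ≤ N, ∃ C : Submodule F (Fin n → F),
      IsLinIntersecting C ∧ M - c ≤ Module.finrank F C := by
  have := D.finite_points
  have := Fintype.ofFinite {φ : R →ₐ[F] F // φ h = 0}
  obtain ⟨n, ⟨eq⟩⟩ := Finite.exists_equiv_fin {φ : R →ₐ[F] F // φ h = 0}
  obtain ⟨P, hPdef⟩ : ∃ P : Fin n → (R →ₐ[F] F), P = fun i => (eq.symm i).1 := ⟨_, rfl⟩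
  have hP : Function.Injective P := by
    rw [hPdef]; exact fun i j hij => eq.symm.injective (Subtype.ext hij)
  have hPh : ∀ i, P i h = 0 := by rw [hPdef]; exact fun i => (eq.symm i).2
  have hPs : ∀ φ : R →ₐ[F] F, φ h = 0 → ∃ i, P i = φ := by
    intro φ hφ
    exact ⟨eq ⟨φ, hφ⟩, by rw [hPdef]; simp⟩
  have hvan : ∀ f : R, (∀ i, P i f = 0) → ∀ φ : R →ₐ[F] F, φ h = 0 → φ f = 0 := by
    intro f hf φ hφ
    obtain ⟨i, rfl⟩ := hPs φ hφ
    exact hf i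
  refine ⟨n, D.card_le hP hPh, ?_⟩
  have := D.RL_finite c
  have := D.RL_finite M
  -- the evaluations as functionals on `RL c`, and a maximal independent subfamily
  let v : Fin n → Module.Dual F (D.RL c) := fun i => (P i).toLinearMap.comp (D.RL c).subtype
  obtain ⟨κ, a, ha, hspan, hli⟩ := exists_linearIndependent' F v
  have := Finite.of_injective a ha
  have := Fintype.ofFinite κ
  have hκ : Fintype.card κ ≤ Module.finrank F (D.RL c) := by
    have := hli.fintype_card_le_finrank
    rwa [Subspace.dual_finrank_eq] at this
  let ev : R →ₗ[F] (Fin n → F) := LinearMap.pi fun i => (P i).toLinearMap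
  let ψ : D.RL M →ₗ[F] (κ → F) :=
    (LinearMap.pi fun k => (P (a k)).toLinearMap).comp (D.RL M).subtype
  let E : LinearMap.ker ψ →ₗ[F] (Fin n → F) :=
    (ev.comp (D.RL M).subtype).comp (LinearMap.ker ψ).subtype
  have hE : Function.Injective E := by
    intro f g hfg
    apply Subtype.ext; apply Subtype.ext
    refine sub_eq_zero.1 (D.eq_zero_of_vanish hMN (sub_mem f.1.2 g.1.2) (hvan _ fun i => ?_))
    rw [map_sub, sub_eq_zero]
    exact congrFun hfg i
  refine ⟨LinearMap.range E, ?_, ?_⟩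
  · rintro _ ⟨⟨⟨f, hfM⟩, hfk⟩, rfl⟩ hf0 _ ⟨⟨⟨f', hfM'⟩, hfk'⟩, rfl⟩ hf0'
    have hf : f ≠ 0 := by
      rintro rfl; exact hf0 (map_zero E)
    have hf' : f' ≠ 0 := by
      rintro rfl; exact hf0' (map_zero E)
    by_contra hcon
    push Not at hcon
    have hmul : ∀ i, P i (f * f') = 0 := by
      intro i
      rw [map_mul]
      by_cases hi : P i f = 0
      · rw [hi, zero_mul]
      · have : P i f' = 0 := hcon i hi
        rw [this, mul_zero]
    obtain ⟨g, hg⟩ := dvd_of_vanish D.frob (hvan _ hmul)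
    have hff : f * f' ≠ 0 := mul_ne_zero hf hf'
    have hg0 : g ≠ 0 := by
      rintro rfl; exact hff (by rw [hg, mul_zero])
    have hgc : g ∈ D.RL c := by
      rw [D.mem_RL_iff hg0]
      have h1 := (D.mem_RL_iff hf).1 hfM
      have h2 := (D.mem_RL_iff hf').1 hfM'
      have h3 := D.order_mul hf hf'
      rw [hg, D.order_mul D.h_ne hg0, D.h_order] at h3
      omega
    have hgk : ∀ k, P (a k) g = 0 := by
      intro k
      -- Multiplying by a function `e` that is `1` at this point and `0` at the other zeros of `h`
      -- makes `f` and `f'` divisible by `h`, so that `e² g` is divisible by `h` as well.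
      obtain ⟨e, he1, he2⟩ := exists_delta hP (a k)
      have hvk : ∀ f₀ : R, P (a k) f₀ = 0 → h ∣ e * f₀ := by
        intro f₀ hf₀
        refine dvd_of_vanish D.frob (hvan _ fun i => ?_)
        rw [map_mul]
        by_cases hi : i = a k
        · rw [hi, hf₀, mul_zero]
        · rw [he2 i hi, zero_mul]
      obtain ⟨x, hx⟩ := hvk f (congrFun hfk k)
      obtain ⟨y, hy⟩ := hvk f' (congrFun hfk' k)
      have h1 : e ^ 2 * g = h * (x * y) := by
        apply mul_left_cancel₀ D.h_ne
        calc h * (e ^ 2 * g) = e ^ 2 * (h * g) := by ring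
          _ = (e * f) * (e * f') := by rw [← hg]; ring
          _ = h * (h * (x * y)) := by rw [hx, hy]; ring
      have h2 := congrArg (P (a k)) h1
      rwa [map_mul, map_mul, map_pow, he1, hPh, one_pow, one_mul, zero_mul] at h2
    have hall : ∀ i, P i g = 0 := by
      have hle : Submodule.span F (Set.range v) ≤
          LinearMap.ker (Module.Dual.eval F (D.RL c) ⟨g, hgc⟩) := by
        rw [← hspan, Submodule.span_le]
        rintro _ ⟨k, rfl⟩
        exact hgk k
      intro i
      exact hle (Submodule.subset_span ⟨i, rfl⟩)
    exact hg0 (D.eq_zero_of_vanish D.c_lt hgc (hvan _ hall))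
  · rw [LinearMap.finrank_range_of_inj hE]
    have h1 := LinearMap.finrank_range_add_finrank_ker ψ
    have h2 := Submodule.finrank_le (LinearMap.range ψ)
    rw [Module.finrank_fintype_fun_eq_card] at h2
    have h3 := D.finrank_add (M - c)
    rw [Nat.add_sub_cancel' hcM] at h3
    omega

end PoleData
end GS

namespace GS

/-! ### Asymptotics -/

variable {F : Type*} [Field F] [Fintype F]

lemma setup_of_card {s : ℕ} (hs : 3 ≤ s) (hF : Fintype.card F = s ^ 2) :
    Setup F (LaurentSeries F) s ∧ ∀ a b : PowerSeries F, (a + b) ^ s = a ^ s + b ^ s := by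
  obtain ⟨p, hp, m, hpp, hm⟩ := FiniteField.card' F
  have := Fact.mk hpp
  obtain ⟨k, -, rfl⟩ := (Nat.dvd_prime_pow hpp).1
    (show s ∣ p ^ (m : ℕ) by rw [← hm, hF]; exact dvd_pow_self s two_ne_zero)
  have : CharP (LaurentSeries F) p :=
    charP_of_injective_algebraMap (algebraMap F (LaurentSeries F)).injective p
  have : CharP (PowerSeries F) p :=
    charP_of_injective_algebraMap (algebraMap F (PowerSeries F)).injective p
  exact ⟨⟨hs, hF, fun a b => add_pow_char_pow a b p k⟩, fun a b => add_pow_char_pow a b p k⟩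

/-- The codes obtained at level `n` of the tower, from `PoleData.exists_code` with `c = s ^ (n+1)`,
`N = (s-1) c` and `M = ⌊s c / 2⌋`. -/
lemma exists_tower_code {s : ℕ} (hs : 5 ≤ s) (hF : Fintype.card F = s ^ 2) (n : ℕ) :
    ∃ m ≤ (s - 1) * s ^ (n + 1), n < m ∧ ∃ C : Submodule F (Fin m → F),
      IsLinIntersecting C ∧ (s - 2) * s ^ (n + 1) ≤ 2 * Module.finrank F C + 1 := by
  obtain ⟨H, hadd⟩ := setup_of_card (by omega) hF
  obtain ⟨R, h, hR, h0, hord, hpos, hex, hfrob⟩ := exists_ring H hadd n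
  obtain ⟨c, hc⟩ : ∃ c, c = s ^ (n + 1) := ⟨_, rfl⟩
  have hcn : n < c := by
    have := Nat.lt_pow_self (n := n + 1) (show 1 < s by omega)
    omega
  obtain ⟨t, rfl⟩ : ∃ t, s = t + 5 := ⟨s - 5, by omega⟩
  have hN : (t + 5 - 1) * c = t * c + 4 * c := by
    rw [show t + 5 - 1 = t + 4 by omega]; ring
  have hN2 : (t + 5 - 2) * c = t * c + 3 * c := by
    rw [show t + 5 - 2 = t + 3 by omega]; ring
  rw [← hc, hN, hN2]
  have D : PoleData (F := F) (R.val : R →+* LaurentSeries F) ⟨h, hR⟩ (t * c + 4 * c) c :=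
    { inj := Subtype.val_injective
      const := fun a => LaurentSeries.algebraMap_apply F a
      pos := fun f hf => Subtype.ext (hpos f.1 f.2 hf)
      h_ne := fun hcon => h0 (congrArg Subtype.val hcon)
      h_order := by
        change h.order = _
        rw [hord, hc]; push_cast; ring
      exist := fun j hj => by
        obtain ⟨f, hf, e⟩ := hex j (hc ▸ hj)
        exact ⟨⟨f, hf⟩, e⟩
      frob := fun f => by
        obtain ⟨g, hg, e⟩ := hfrob f.1 f.2
        exact ⟨⟨g, hg⟩, Subtype.ext e⟩
      c_pos := by omega
      c_lt := by omega }
  obtain ⟨m, hm, C, hC, hdim⟩ := D.exists_code (M := (t * c + 5 * c) / 2)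
    (by omega) (by omega) (by omega)
  have hle : Module.finrank F C ≤ m := by
    simpa using Submodule.finrank_le C
  exact ⟨m, hm, by omega, C, hC, by omega⟩

omit [Fintype F] in
lemma mem_bound {n k : ℕ} (hk : k ∈ {k : ℕ | ∃ C : Submodule F (Fin n → F),
    IsLinIntersecting C ∧ Module.finrank F C = k}) : k ≤ n := by
  obtain ⟨C, -, rfl⟩ := hk
  simpa using Submodule.finrank_le C

omit [Fintype F] in
lemma le_maxIntersectingDim {n : ℕ} {C : Submodule F (Fin n → F)} (hC : IsLinIntersecting C) :
    Module.finrank F C ≤ maxIntersectingDim F n :=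
  le_csSup ⟨n, fun _ hk => mem_bound hk⟩ ⟨C, hC, rfl⟩

omit [Fintype F] in
lemma maxIntersectingDim_le (n : ℕ) : maxIntersectingDim F n ≤ n :=
  csSup_le' fun _ hk => mem_bound hk

omit [Fintype F] in
lemma le_Rq_of_frequently {a : ℝ}
    (h : ∀ n : ℕ, ∃ m, n < m ∧ a ≤ (maxIntersectingDim F m : ℝ) / m) : a ≤ Rq F := by
  apply Filter.le_limsup_of_frequently_le
  · rw [Filter.frequently_atTop]
    intro n
    obtain ⟨m, hm, ha⟩ := h n
    exact ⟨m, hm.le, ha⟩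
  · refine Filter.isBoundedUnder_of ⟨1, fun n => ?_⟩
    exact div_le_one_of_le₀ (by exact_mod_cast maxIntersectingDim_le n) (Nat.cast_nonneg n)

end GS

/-- If `q ≥ 25` is a prime power which is a perfect square, then
`R_q ≥ 1/2 − 1/(2(q^{1/2} − 1))`. -/
theorem Rq_ge_of_square
    (q : ℕ) (hq : IsPrimePow q) (hsq : ∃ s : ℕ, q = s ^ 2) (hq25 : 25 ≤ q)
    (F : Type*) [Field F] [Fintype F] (hF : Fintype.card F = q) :
    (1 : ℝ) / 2 - 1 / (2 * (Real.sqrt q - 1)) ≤ Rq F := by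
  obtain ⟨s, rfl⟩ := hsq
  have hs : 5 ≤ s := by nlinarith
  have hsR : (5 : ℝ) ≤ s := by exact_mod_cast hs
  rw [Nat.cast_pow, Real.sqrt_sq (by positivity)]
  refine le_of_forall_pos_sub_le fun ε hε => GS.le_Rq_of_frequently fun n => ?_
  obtain ⟨n₀, hn₀⟩ := exists_nat_gt (1 / ε)
  obtain ⟨m, hm, hnm, C, hC, hdim⟩ := GS.exists_tower_code hs hF (max n n₀)
  refine ⟨m, lt_of_le_of_lt (le_max_left _ _) hnm, ?_⟩
  have hm0 : (0 : ℝ) < m := by exact_mod_cast (Nat.zero_le _).trans_lt hnm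
  have hmε : 1 < ε * m := by
    have h1 : (n₀ : ℝ) < m := by exact_mod_cast lt_of_le_of_lt (le_max_right _ _) hnm
    have h2 := hn₀.trans h1
    rw [div_lt_iff₀ hε] at h2
    linarith
  obtain ⟨c, hc⟩ : ∃ c, c = s ^ (max n n₀ + 1) := ⟨_, rfl⟩
  rw [← hc] at hm hdim
  have hmR : (m : ℝ) ≤ (s - 1) * c := by
    have : (m : ℝ) ≤ ((s - 1 : ℕ) : ℝ) * c := by exact_mod_cast hm
    rwa [Nat.cast_sub (by omega), Nat.cast_one] at this
  have hdR : ((s : ℝ) - 2) * c ≤ 2 * Module.finrank F C + 1 := by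
    have : ((s - 2 : ℕ) : ℝ) * c ≤ 2 * Module.finrank F C + 1 := by exact_mod_cast hdim
    rwa [Nat.cast_sub (by omega), Nat.cast_ofNat] at this
  have hdim' : (Module.finrank F C : ℝ) ≤ maxIntersectingDim F m := by
    exact_mod_cast GS.le_maxIntersectingDim hC
  rw [le_div_iff₀ hm0]
  refine le_trans ?_ hdim'
  have h1 : (1 : ℝ) / 2 - 1 / (2 * (s - 1)) = (s - 2) / (2 * (s - 1)) := by
    have : (s : ℝ) - 1 ≠ 0 := by linarith
    field_simp
    ring
  have h2 : ((s : ℝ) - 2) / (2 * (s - 1)) * m ≤ (s - 2) * c / 2 := by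
    rw [div_mul_eq_mul_div, div_le_div_iff₀ (by linarith) two_pos]
    nlinarith [mul_le_mul_of_nonneg_left hmR (show (0 : ℝ) ≤ s - 2 by linarith)]
  rw [h1, sub_mul]
  linarith
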